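/- arXiv:1506.08317 — 4 statements merged into one kernel-verified Lean document; each statement's English description precedes it below -/
import Mathlib

section
/- Let Φ be a Young function such that lim_{t→∞} Φ(t)/(t·log log(e^e + t)) = 0. Then for every constant c > 0 there exist a weight w on ℝ, a function f with ∫_ℝ |f|·M_Φ w dx < ∞, and λ > 0 such that w({x ∈ ℝ : |Hf(x)| > λ}) > (c/λ) ∫_ℝ |f|·M_Φ w dx. (In particular, the weak-type inequality w({|Hf|>λ}) ≤ (c/λ)∫|f| M_Φ w fails for such Φ.) -/
open MeasureTheory Set Filter Topology
open scoped ENNReal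

noncomputable section

namespace RT

/-- The Hilbert transform `Hf(x)`, defined as the principal-value limit
`lim_{ε→0⁺} ∫_{|x-y|>ε} f(y)/(x-y) dy` (junk value at points where the limit
does not exist). -/
def Hil (f : ℝ → ℝ) (x : ℝ) : ℝ :=
  limUnder (𝓝[>] (0 : ℝ)) fun ε => ∫ y in {y : ℝ | ε < |x - y|}, f y / (x - y)

/-- The (uncentered) Hardy–Littlewood maximal function over bounded intervals:
`Mf(x) = sup_{I ∋ x} (1/|I|) ∫_I |f|`. -/
def HLMax (f : ℝ → ℝ) (x : ℝ) : ℝ≥0∞ :=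
  ⨆ (a : ℝ) (b : ℝ) (_ : a < b) (_ : x ∈ Icc a b),
    (ENNReal.ofReal (b - a))⁻¹ * ∫⁻ y in Ioo a b, ENNReal.ofReal |f y|

/-- `M_r f = (M(|f|^r))^{1/r}`. -/
def Mr (r : ℝ) (f : ℝ → ℝ) (x : ℝ) : ℝ≥0∞ :=
  HLMax (fun y => |f y| ^ r) x ^ (1 / r)

/-- The Orlicz maximal operator
`M_Φ f(x) = sup_{I ∋ x} inf {λ > 0 : (1/|I|) ∫_I Φ(|f|/λ) ≤ 1}`. -/
def MOrlicz (Φ : ℝ → ℝ) (f : ℝ → ℝ) (x : ℝ) : ℝ≥0∞ :=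
  ⨆ (a : ℝ) (b : ℝ) (_ : a < b) (_ : x ∈ Icc a b),
    sInf {lam : ℝ≥0∞ | ∃ l : ℝ, 0 < l ∧ lam = ENNReal.ofReal l ∧
      (∫⁻ y in Ioo a b, ENNReal.ofReal (Φ (|f y| / l))) ≤ ENNReal.ofReal (b - a)}

/-- The centered maximal operator with respect to a weight `v`:
`M^c_v h(x) = sup_{ρ>0} (1/v(B(x,ρ))) ∫_{B(x,ρ)} |h| v`. -/
def Mc (v h : ℝ → ℝ) (x : ℝ) : ℝ≥0∞ :=
  ⨆ (ρ : ℝ) (_ : 0 < ρ),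
    (∫⁻ y in Ioo (x - ρ) (x + ρ), ENNReal.ofReal (v y))⁻¹ *
      ∫⁻ y in Ioo (x - ρ) (x + ρ), ENNReal.ofReal |h y| * ENNReal.ofReal (v y)

/-- A Young function: convex, increasing, `Φ(0) = 0`, `Φ(t)/t → ∞`. -/
structure IsYoung (Φ : ℝ → ℝ) : Prop where
  convexOn : ConvexOn ℝ (Ici 0) Φ
  mono : MonotoneOn Φ (Ici 0)
  map_zero : Φ 0 = 0
  superlinear : Tendsto (fun t => Φ t / t) atTop atTop

/-- A weight: a nonnegative locally integrable function on `ℝ`. -/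
def IsWeight (w : ℝ → ℝ) : Prop :=
  (∀ x, 0 ≤ w x) ∧ LocallyIntegrable w volume

/-! Triadic machinery: intervals are represented by their endpoint pairs,
`(a, b)` corresponding to `[a, b)`. -/

/-- The length of the interval. -/
def len (I : ℝ × ℝ) : ℝ := I.2 - I.1

/-- The set `[a, b)` of the interval `I = (a, b)`. -/
def ivl (I : ℝ × ℝ) : Set ℝ := Ico I.1 I.2

/-- A triadic interval `[3^j n, 3^j (n+1))`, `j, n ∈ ℤ`. -/
def IsTriadic (I : ℝ × ℝ) : Prop :=
  ∃ j n : ℤ, I.1 = (3 : ℝ) ^ j * n ∧ I.2 = (3 : ℝ) ^ j * (n + 1)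

/-- The middle third `I^Δ` of `I`: same center, one third of the length. -/
def mid (I : ℝ × ℝ) : ℝ × ℝ := (I.1 + (I.2 - I.1) / 3, I.2 - (I.2 - I.1) / 3)

/-- `P` assigns to each triadic interval `J ⊆ [0,1)` a triadic interval
adjacent to `J^Δ` (on its left or on its right) with `|P J| = 3^{-k} |J|`. -/
def GoodP (k : ℕ) (P : ℝ × ℝ → ℝ × ℝ) : Prop :=
  ∀ J : ℝ × ℝ, IsTriadic J → ivl J ⊆ Ico (0 : ℝ) 1 →
    IsTriadic (P J) ∧ len (P J) = len J / 3 ^ k ∧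
      ((P J).2 = (mid J).1 ∨ (P J).1 = (mid J).2)

/-- The families `𝒥_l`: `𝒥_1 = {[0,1)}`, and `𝒥_{l+1}` consists of the `3^{k-1}`
triadic subintervals of `J^Δ` of length `|J|/3^k`, for each `J ∈ 𝒥_l`.
(`𝒥_0` is empty.) -/
def Jfam (k : ℕ) : ℕ → Set (ℝ × ℝ)
  | 0 => ∅
  | 1 => {((0 : ℝ), (1 : ℝ))}
  | l + 2 => {J' | IsTriadic J' ∧ ∃ J ∈ Jfam k (l + 1),
      len J' = len J / 3 ^ k ∧ ivl J' ⊆ ivl (mid J)}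

/-- The families `ℐ_l = {P J : J ∈ 𝒥_l}`. -/
def Ifam (k : ℕ) (P : ℝ × ℝ → ℝ × ℝ) (l : ℕ) : Set (ℝ × ℝ) :=
  P '' Jfam k l

/-- `Ω_l = ⋃_{I ∈ ℐ_l} I`. -/
def Omega (k : ℕ) (P : ℝ × ℝ → ℝ × ℝ) (l : ℕ) : Set ℝ :=
  ⋃ I ∈ Ifam k P l, ivl I

/-- The constant `3^k / (3^{k-1} + 1)`. -/
def alpha (k : ℕ) : ℝ := 3 ^ k / (3 ^ (k - 1) + 1)

/-- The Reguera–Thiele weight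
`w_k = ∑_{l=1}^∞ (3^k/(3^{k-1}+1))^l χ_{Ω_l}`. -/
def wk (k : ℕ) (P : ℝ × ℝ → ℝ × ℝ) (x : ℝ) : ℝ :=
  ∑' l : ℕ, alpha k ^ (l + 1) * (Omega k P (l + 1)).indicator (fun _ => (1 : ℝ)) x

/-- The absolutely convergent Hilbert integral. -/
def H0 (f : ℝ → ℝ) (x : ℝ) : ℝ := ∫ y, f y / (x - y)

lemma lint_affine (h : ℝ → ℝ≥0∞) (hh : Measurable h) {R : ℝ} (hR : 0 < R) (b : ℝ) :
    ∫⁻ x, h (R * x - b) = ENNReal.ofReal R⁻¹ * ∫⁻ x, h x := by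
  have h1 : ∫⁻ x, h (R * x - b) = ∫⁻ y, h (y - b) ∂(Measure.map (fun x => R * x) volume) := by
    rw [lintegral_map (by fun_prop) (by fun_prop)]
  rw [h1, Real.map_volume_mul_left hR.ne', lintegral_smul_measure, lintegral_sub_right_eq_self,
    abs_of_pos (inv_pos.2 hR), smul_eq_mul]

lemma lint_affine_set (h : ℝ → ℝ≥0∞) (hh : Measurable h) {R : ℝ} (hR : 0 < R) (c a b : ℝ) :
    ∫⁻ x in Ioo a b, h (R * x - c)
      = ENNReal.ofReal R⁻¹ * ∫⁻ x in Ioo (R * a - c) (R * b - c), h x := by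
  rw [← lintegral_indicator measurableSet_Ioo, ← lintegral_indicator measurableSet_Ioo,
    ← lint_affine _ (hh.indicator measurableSet_Ioo) hR c]
  congr 1
  ext x
  have : (R * x - c ∈ Ioo (R * a - c) (R * b - c)) ↔ x ∈ Ioo a b := by
    simp only [mem_Ioo, sub_lt_sub_iff_right, mul_lt_mul_iff_right₀ hR]
  simp only [indicator, this]

lemma int_affine (h : ℝ → ℝ) {R : ℝ} (hR : 0 < R) (b : ℝ) :
    ∫ x, h (R * x - b) = R⁻¹ * ∫ x, h x := by
  have := Measure.integral_comp_mul_left (fun y => h (y - b)) R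
  rw [this, integral_sub_right_eq_self, abs_of_pos (inv_pos.2 hR), smul_eq_mul]

lemma H0_affine (f : ℝ → ℝ) {R : ℝ} (hR : 0 < R) (b x : ℝ) :
    H0 (fun y => f (R * y - b)) x = H0 f (R * x - b) := by
  unfold H0
  have := int_affine (fun s => f s / (R * x - b - s)) hR b
  rw [← mul_right_inj' (inv_ne_zero hR.ne'), ← this, ← integral_const_mul]
  congr 1
  ext y
  have e : R * x - b - (R * y - b) = R * (x - y) := by ring
  simp only [e]
  rw [div_mul_eq_div_div_swap, inv_mul_eq_div]

lemma van_iff {f : ℝ → ℝ} {x : ℝ} :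
    (∀ᶠ y in 𝓝 x, f y = 0) ↔ ∃ ε > 0, ∀ y, |x - y| < ε → f y = 0 := by
  rw [Metric.eventually_nhds_iff]
  simp only [Real.dist_eq, abs_sub_comm]

lemma integrable_H0 {f : ℝ → ℝ} (hf : Integrable f) {x : ℝ}
    (h : ∀ᶠ y in 𝓝 x, f y = 0) : Integrable (fun y => f y / (x - y)) := by
  obtain ⟨ε, hε, h⟩ := van_iff.1 h
  refine (hf.norm.const_mul ε⁻¹).mono' ?_ ?_
  · exact (hf.aestronglyMeasurable.aemeasurable.div (by fun_prop)).aestronglyMeasurable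
  · refine Eventually.of_forall fun y => ?_
    by_cases hy : |x - y| < ε
    · simp [h y hy]
    · push Not at hy
      rw [norm_div, div_eq_inv_mul]
      gcongr
      exact hy

lemma H0_add {f g : ℝ → ℝ} (hf : Integrable f) (hg : Integrable g) {x : ℝ}
    (h : ∀ᶠ y in 𝓝 x, f y = 0) (h' : ∀ᶠ y in 𝓝 x, g y = 0) :
    H0 (fun y => f y + g y) x = H0 f x + H0 g x := by
  unfold H0
  rw [← integral_add (integrable_H0 hf h) (integrable_H0 hg h')]
  simp only [add_div]

lemma H0_sum {ι : Type*} (s : Finset ι) {f : ι → ℝ → ℝ} (hf : ∀ i ∈ s, Integrable (f i)) {x : ℝ}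
    (h : ∀ i ∈ s, ∀ᶠ y in 𝓝 x, f i y = 0) :
    H0 (fun y => ∑ i ∈ s, f i y) x = ∑ i ∈ s, H0 (f i) x := by
  unfold H0
  rw [← integral_finsetSum s fun i hi => integrable_H0 (hf i hi) (h i hi)]
  simp only [Finset.sum_div]

lemma H0_measurable {f : ℝ → ℝ} (hf : Measurable f) : Measurable (H0 f) := by
  have : StronglyMeasurable (fun p : ℝ × ℝ => f p.2 / (p.1 - p.2)) := by
    apply Measurable.stronglyMeasurable
    fun_prop
  exact this.integral_prod_right.measurable

lemma Hil_eq {f : ℝ → ℝ} {x : ℝ} (h : ∀ᶠ y in 𝓝 x, f y = 0) : Hil f x = H0 f x := by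
  obtain ⟨ε, hε, h⟩ := van_iff.1 h
  apply Tendsto.limUnder_eq
  apply tendsto_const_nhds.congr'
  filter_upwards [Ioo_mem_nhdsGT hε] with δ hδ
  symm
  apply setIntegral_eq_integral_of_forall_compl_eq_zero
  intro y hy
  simp only [mem_ofPred_eq, not_lt] at hy
  rw [h y (hy.trans_lt hδ.2), zero_div]

/-- Bounds for the Hilbert integral of the indicator of an interval. -/
lemma H0_ind {p q x : ℝ} (hpq : p ≤ q) (hx : x < p ∨ q < x) :
    (q - p) / (x - p) ≤ H0 (indicator (Ico p q) (fun _ => (1 : ℝ))) x ∧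
    H0 (indicator (Ico p q) (fun _ => (1 : ℝ))) x ≤ (q - p) / (x - q) := by
  have e : H0 (indicator (Ico p q) (fun _ => (1 : ℝ))) x = ∫ y in Ico p q, 1 / (x - y) := by
    unfold H0
    rw [← integral_indicator measurableSet_Ico]
    congr 1
    ext y
    by_cases hy : y ∈ Ico p q <;> simp [hy]
  have hc : ContinuousOn (fun y => 1 / (x - y)) (Icc p q) := by
    apply ContinuousOn.div (by fun_prop) (by fun_prop)
    intro y hy
    rcases hx with h | h
    · exact (show x - y < 0 by linarith [hy.1]).ne
    · exact (show 0 < x - y by linarith [hy.2]).ne'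
  have hi : IntegrableOn (fun y => 1 / (x - y)) (Ico p q) :=
    (hc.integrableOn_compact isCompact_Icc).mono_set Ico_subset_Icc_self
  have hconst : ∀ c : ℝ, ∫ y in Ico p q, c = (q - p) * c := by
    intro c
    simp [hpq]
  have hfin : volume (Ico p q) ≠ ⊤ := by simp
  constructor
  · rw [e, div_eq_mul_one_div, ← hconst]
    apply setIntegral_mono_on (by simp) hi measurableSet_Ico
    intro y hy
    rcases hx with h | h
    · exact one_div_le_one_div_of_neg_of_le (by linarith [hy.1]) (by linarith [hy.1])
    · exact one_div_le_one_div_of_le (by linarith [hy.2]) (by linarith [hy.1])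
  · rw [e, div_eq_mul_one_div, ← hconst]
    apply setIntegral_mono_on hi (by simp) measurableSet_Ico
    intro y hy
    rcases hx with h | h
    · exact one_div_le_one_div_of_neg_of_le (by linarith [hy.1, hy.2]) (by linarith [hy.2])
    · exact one_div_le_one_div_of_le (by linarith [hy.2]) (by linarith [hy.2])

/-- The dipole. -/
def gd (r : ℝ) (y : ℝ) : ℝ :=
  indicator (Ico (1 / 3 - r) (1 / 3)) (fun _ => (1 : ℝ)) y +
    -indicator (Ico 0 r) (fun _ => (1 : ℝ)) y

lemma gd_meas (r : ℝ) : Measurable (gd r) := by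
  unfold gd
  exact (measurable_const.indicator measurableSet_Ico).add
    (measurable_const.indicator measurableSet_Ico).neg

lemma int_ind (p q : ℝ) : Integrable (indicator (Ico p q) (fun _ => (1 : ℝ))) := by
  rw [integrable_indicator_iff measurableSet_Ico]
  simp

lemma gd_int (r : ℝ) : Integrable (gd r) := (int_ind _ _).add (int_ind _ _).neg

lemma gd_supp {r : ℝ} (hr0 : 0 < r) (hr : r ≤ 1 / 9) {y : ℝ} (hy : gd r y ≠ 0) :
    0 ≤ y ∧ y < 1 / 3 := by
  by_contra h
  apply hy
  have h1 : y ∉ Ico (1 / 3 - r) (1 / 3) := fun h' => h ⟨by linarith [h'.1], h'.2⟩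
  have h2 : y ∉ Ico 0 r := fun h' => h ⟨h'.1, by linarith [h'.2]⟩
  rw [gd, indicator_of_notMem h1, indicator_of_notMem h2]; simp

lemma van_ind {p q x : ℝ} (hx : x < p ∨ q < x) :
    ∀ᶠ y in 𝓝 x, indicator (Ico p q) (fun _ => (1 : ℝ)) y = 0 := by
  rcases hx with h | h
  · filter_upwards [Iio_mem_nhds h] with y hy
    exact indicator_of_notMem (fun h' => absurd h'.1 (not_le.2 hy)) _
  · filter_upwards [Ioi_mem_nhds h] with y hy
    exact indicator_of_notMem (fun h' => absurd h'.2 (not_lt.2 (le_of_lt hy))) _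

lemma gd_van {r : ℝ} (hr0 : 0 < r) (hr : r ≤ 1 / 9) {x : ℝ} (hx : x < 0 ∨ 1 / 3 < x) :
    ∀ᶠ y in 𝓝 x, gd r y = 0 := by
  have h1 : x < 1 / 3 - r ∨ 1 / 3 < x := hx.imp (fun h => by linarith) id
  have h2 : x < 0 ∨ r < x := hx.imp id (fun h => by linarith)
  filter_upwards [van_ind h1, van_ind h2] with y hy1 hy2
  rw [gd, hy1, hy2]; simp

lemma H0_gd {r : ℝ} (hr0 : 0 < r) (hr : r ≤ 1 / 9) {x : ℝ} (hx : x < 0 ∨ 1 / 3 < x) :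
    r / (x - 1 / 3 + r) - r / (x - r) ≤ H0 (gd r) x := by
  have h1 : x < 1 / 3 - r ∨ 1 / 3 < x := hx.imp (fun h => by linarith) id
  have h2 : x < 0 ∨ r < x := hx.imp id (fun h => by linarith)
  have e : H0 (gd r) x = H0 (indicator (Ico (1 / 3 - r) (1 / 3)) (fun _ => (1 : ℝ))) x +
      H0 (fun y => -indicator (Ico 0 r) (fun _ => (1 : ℝ)) y) x := by
    apply H0_add (int_ind _ _) (int_ind _ _).neg (van_ind h1)
    filter_upwards [van_ind h2] with y hy
    rw [Pi.neg_apply, hy, neg_zero]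
  have e2 : H0 (fun y => -indicator (Ico 0 r) (fun _ => (1 : ℝ)) y) x =
      - H0 (indicator (Ico 0 r) (fun _ => (1 : ℝ))) x := by
    unfold H0
    rw [← integral_neg]
    simp only [neg_div]
  have b1 := (H0_ind (by linarith : 1 / 3 - r ≤ 1 / 3) h1).1
  have b2 := (H0_ind hr0.le h2).2
  rw [e, e2]
  have e3 : (1 / 3 - (1 / 3 - r)) / (x - (1 / 3 - r)) = r / (x - 1 / 3 + r) := by
    congr 1 <;> ring
  rw [e3] at b1
  rw [sub_zero] at b2
  linarith

lemma gd_lint {r : ℝ} (hr0 : 0 < r) :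
    ∫⁻ y, ENNReal.ofReal |gd r y| ≤ ENNReal.ofReal (2 * r) := by
  calc ∫⁻ y, ENNReal.ofReal |gd r y|
      ≤ ∫⁻ y, (indicator (Ico (1 / 3 - r) (1 / 3)) (fun _ => (1 : ℝ≥0∞)) y +
          indicator (Ico 0 r) (fun _ => (1 : ℝ≥0∞)) y) := by
        apply lintegral_mono
        intro y
        unfold gd
        by_cases h1 : y ∈ Ico (1 / 3 - r) (1 / 3) <;> by_cases h2 : y ∈ Ico 0 r <;>
          simp only [indicator_of_mem, indicator_of_notMem, h1, h2, not_false_eq_true] <;> simp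
    _ = ENNReal.ofReal (2 * r) := by
        rw [lintegral_add_left (measurable_const.indicator measurableSet_Ico)]
        simp only [lintegral_indicator measurableSet_Ico, lintegral_one, Measure.restrict_apply,
          MeasurableSet.univ, univ_inter, Real.volume_Ico]
        rw [← ENNReal.ofReal_add (by linarith) (by linarith)]
        congr 1
        ring

/-- The inductive package. -/
structure Good (M n : ℕ) (ρ : ℝ) (w f : ℝ → ℝ) (F : ℝ → ℝ≥0∞) : Prop where
  wm : Measurable w
  w0 : ∀ x, 0 ≤ w x
  wle : ∀ x, w x ≤ 3 ^ (n + 1)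
  wsupp : ∀ x, w x ≠ 0 → 1 / 3 ≤ x ∧ x ≤ 2 / 3
  wmass : ∫⁻ x, ENNReal.ofReal (w x) = 1
  fm : Measurable f
  fint : Integrable f
  fsupp : ∀ x, f x ≠ 0 → 0 ≤ x ∧ x < 1
  fw : ∀ x, w x ≠ 0 → ∀ᶠ y in 𝓝 x, f y = 0
  Fm : Measurable F
  Fmass : ∫⁻ x, F x ≤ n * ENNReal.ofReal (14 / M)
  F7 : ∀ x, ENNReal.ofReal |f x| * 7 ≤ F x
  FQ : ∀ x a b, a < b → x ∈ Icc a b →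
    ENNReal.ofReal |f x| * ∫⁻ y in Ioo a b, ENNReal.ofReal (w y) ≤ F x * ENNReal.ofReal (b - a)
  Hpos : ∀ x, (x ≤ -1 / 3 ∨ 4 / 3 ≤ x) → 0 ≤ H0 f x
  Hexp : ∫⁻ x, ENNReal.ofReal (w x) * ENNReal.ofReal (Real.exp (-H0 f x)) ≤ ENNReal.ofReal ρ ^ n

lemma good_zero (M : ℕ) (ρ : ℝ) :
    Good M 0 ρ (indicator (Icc (1 / 3) (2 / 3)) (fun _ => 3)) (fun _ => 0) (fun _ => 0) := by
  have hm : ∫⁻ x : ℝ, ENNReal.ofReal (indicator (Icc (1 / 3) (2 / 3)) (fun _ => 3) x) = 1 := by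
    have : ∀ x : ℝ, ENNReal.ofReal (indicator (Icc (1 / 3) (2 / 3)) (fun _ => 3) x) =
        indicator (Icc (1 / 3) (2 / 3)) (fun _ => (3 : ℝ≥0∞)) x := by
      intro x
      by_cases h : x ∈ Icc (1 / 3 : ℝ) (2 / 3)
      · rw [indicator_of_mem h, indicator_of_mem h]; simp
      · rw [indicator_of_notMem h, indicator_of_notMem h]; simp
    simp only [this]
    rw [lintegral_indicator measurableSet_Icc]
    simp only [lintegral_const, Measure.restrict_apply, MeasurableSet.univ, univ_inter,
      Real.volume_Icc]
    rw [show (3 : ℝ≥0∞) = ENNReal.ofReal 3 by simp, ← ENNReal.ofReal_mul (by norm_num)]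
    norm_num
  constructor
  · exact measurable_const.indicator measurableSet_Icc
  · intro x
    exact indicator_nonneg (fun _ _ => by norm_num) x
  · intro x
    by_cases h : x ∈ Icc (1 / 3 : ℝ) (2 / 3)
    · rw [indicator_of_mem h]; norm_num
    · rw [indicator_of_notMem h]; norm_num
  · intro x hx
    by_contra h
    exact hx (indicator_of_notMem (s := Icc (1 / 3 : ℝ) (2 / 3)) h _)
  · exact hm
  · exact measurable_const
  · simp
  · intro x hx; exact absurd rfl hx
  · intro x _; simp
  · exact measurable_const
  · simp
  · simp
  · simp
  · intro x _; simp [H0]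
  · simp only [H0, zero_div, integral_zero, neg_zero, Real.exp_zero, ENNReal.ofReal_one, mul_one,
      pow_zero]
    exact hm.le

lemma far_of_ne {w : ℝ → ℝ} (hs : ∀ x, w x ≠ 0 → 1 / 3 ≤ x ∧ x ≤ 2 / 3) {p q : ℝ}
    (h : ∫⁻ y in Ioo p q, ENNReal.ofReal (w y) ≠ 0) : p < 2 / 3 ∧ 1 / 3 < q := by
  by_contra hc
  apply h
  rw [setLIntegral_congr_fun (g := fun _ => 0) measurableSet_Ioo, lintegral_zero]
  intro y hy
  by_contra h0
  have h1 : w y ≠ 0 := by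
    intro h1
    simp [h1] at h0
  have := hs y h1
  exact hc ⟨by linarith [hy.1], by linarith [hy.2]⟩

lemma count_sum {w : ℝ → ℝ} (hs : ∀ x, w x ≠ 0 → 1 / 3 ≤ x ∧ x ≤ 2 / 3)
    (hm : ∫⁻ x, ENNReal.ofReal (w x) = 1) (M : ℕ) (m A B : ℝ) (hAB : 1 / 3 ≤ B - A) :
    ∑ j ∈ Finset.range M, ∫⁻ y in Ioo (A - (m + j)) (B - (m + j)), ENNReal.ofReal (w y)
      ≤ 7 * ENNReal.ofReal (B - A) := by
  classical
  set S := (Finset.range M).filter fun j : ℕ => A - m - 1 ≤ (j : ℝ) ∧ (j : ℝ) ≤ B - m with hS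
  have h1 : ∑ j ∈ Finset.range M, ∫⁻ y in Ioo (A - (m + j)) (B - (m + j)), ENNReal.ofReal (w y)
      ≤ ∑ j ∈ Finset.range M, if A - m - 1 ≤ (j : ℝ) ∧ (j : ℝ) ≤ B - m then (1 : ℝ≥0∞) else 0 := by
    apply Finset.sum_le_sum
    intro j _
    split_ifs with h
    · exact (setLIntegral_le_lintegral _ _).trans hm.le
    · by_contra h0
      push Not at h0
      have := far_of_ne hs h0.ne'
      exact h ⟨by linarith [this.1], by linarith [this.2]⟩
  have h2 : (S.card : ℝ) ≤ B - A + 2 := by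
    have h3 : S.image (fun j : ℕ => (j : ℤ)) ⊆ Finset.Icc ⌈A - m - 1⌉ ⌊B - m⌋ := by
      intro z hz
      simp only [Finset.mem_image, hS, Finset.mem_filter] at hz
      obtain ⟨j, ⟨_, hj1, hj2⟩, rfl⟩ := hz
      rw [Finset.mem_Icc]
      exact ⟨Int.ceil_le.2 (by exact_mod_cast hj1), Int.le_floor.2 (by exact_mod_cast hj2)⟩
    have h4 := Finset.card_le_card h3
    rw [Finset.card_image_of_injective _ Nat.cast_injective, Int.card_Icc] at h4
    have h5 : (S.card : ℤ) ≤ max (⌊B - m⌋ + 1 - ⌈A - m - 1⌉) 0 := by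
      have := Int.ofNat_le.2 h4
      rwa [Int.ofNat_toNat] at this
    have h6 : (S.card : ℝ) ≤ max ((⌊B - m⌋ : ℝ) + 1 - (⌈A - m - 1⌉ : ℝ)) 0 := by exact_mod_cast h5
    refine h6.trans (max_le ?_ (by linarith))
    have := Int.floor_le (B - m)
    have := Int.le_ceil (A - m - 1)
    linarith
  refine h1.trans ?_
  rw [← Finset.sum_filter, Finset.sum_const, nsmul_eq_mul, mul_one]
  rw [show (7 : ℝ≥0∞) = ENNReal.ofReal 7 by simp, ← ENNReal.ofReal_mul (by norm_num),
    ← ENNReal.ofReal_natCast]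
  apply ENNReal.ofReal_le_ofReal
  linarith

/-- The gain from the dipole at the child of index `i`. -/
def Xg (M i : ℕ) : ℝ := 1 / ((i : ℝ) + 2) - 1 / ((M : ℝ) - 1 + i)

lemma good_step {M n : ℕ} {ρ : ℝ} {w f : ℝ → ℝ} {F : ℝ → ℝ≥0∞} (hM : 3 ≤ M)
    (hρ : ∑ i ∈ Finset.range M, Real.exp (-Xg M i) ≤ ρ * M) (G : Good M n ρ w f F) :
    Good M (n + 1) ρ
      (fun x => 3 * ∑ i ∈ Finset.range M, w (3 * M * x - (M + i)))
      (fun x => gd (3 * (M : ℝ))⁻¹ x + ∑ i ∈ Finset.range M, f (3 * M * x - (M + i)))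
      (fun x => 21 * ENNReal.ofReal |gd (3 * (M : ℝ))⁻¹ x| +
        3 * ∑ i ∈ Finset.range M, F (3 * M * x - (M + i))) := by
  have hM' : (3 : ℝ) ≤ M := by exact_mod_cast hM
  have hM0 : (0 : ℝ) < M := by linarith
  set R : ℝ := 3 * (M : ℝ) with hRdef
  have hR9 : 9 ≤ R := by linarith
  have hR : 0 < R := by linarith
  have hr0 : 0 < R⁻¹ := inv_pos.2 hR
  have hr : R⁻¹ ≤ 1 / 9 := by rw [← one_div]; exact one_div_le_one_div_of_le (by norm_num) hR9
  have hRr : R * R⁻¹ = 1 := mul_inv_cancel₀ hR.ne'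
  have h3r : 3 * ENNReal.ofReal R⁻¹ * M = 1 := by
    rw [show (3 : ℝ≥0∞) = ENNReal.ofReal 3 by simp, ← ENNReal.ofReal_mul (by norm_num),
      ← ENNReal.ofReal_natCast, ← ENNReal.ofReal_mul (by positivity), ← ENNReal.ofReal_one]
    congr 1
    rw [hRdef] at hRr ⊢
    linarith
  have hwm := G.wm
  have hfm := G.fm
  have hFm := G.Fm
  have hgm := gd_meas R⁻¹
  -- only one child sees a given point
  have hone : ∀ x, ∀ i ∈ Finset.range M, w (R * x - (M + i)) ≠ 0 → ∀ j ∈ Finset.range M, j ≠ i →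
      (R * x - (M + j) ≤ -1 / 3 ∨ 4 / 3 ≤ R * x - (M + j)) := by
    intro x i _ hi j _ hji
    have h := G.wsupp _ hi
    rcases lt_or_gt_of_ne hji with h' | h'
    · right
      have : (j : ℝ) + 1 ≤ i := by exact_mod_cast h'
      linarith [h.1]
    · left
      have : (i : ℝ) + 1 ≤ j := by exact_mod_cast h'
      linarith [h.2]
  have hone0 : ∀ x, ∀ i ∈ Finset.range M, w (R * x - (M + i)) ≠ 0 →
      ∑ j ∈ Finset.range M, w (R * x - (M + j)) = w (R * x - (M + i)) := by
    intro x i hi hw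
    apply Finset.sum_eq_single i
    · intro j hj hji
      by_contra h
      have := G.wsupp _ h
      rcases hone x i hi hw j hj hji with h | h <;> linarith [this.1, this.2]
    · intro h; exact absurd hi h
  have hex : ∀ x, 3 * ∑ i ∈ Finset.range M, w (R * x - (M + i)) ≠ 0 →
      ∃ i ∈ Finset.range M, w (R * x - (M + i)) ≠ 0 := by
    intro x hx
    by_contra h
    push Not at h
    exact hx (by rw [Finset.sum_eq_zero h, mul_zero])
  have hvan : ∀ z, (z ≤ -1 / 3 ∨ 4 / 3 ≤ z) → ∀ᶠ y in 𝓝 z, f y = 0 := by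
    intro z hz
    have hz' : z ∈ (Icc (0 : ℝ) 1)ᶜ := by
      intro h
      rcases hz with h' | h' <;> linarith [h.1, h.2]
    filter_upwards [isClosed_Icc.isOpen_compl.mem_nhds hz'] with y hy
    by_contra h
    have := G.fsupp y h
    exact hy ⟨this.1, this.2.le⟩
  have hvanc : ∀ x c, (∀ᶠ y in 𝓝 (R * x - c), f y = 0) → ∀ᶠ y in 𝓝 x, f (R * y - c) = 0 := by
    intro x c h
    have : Tendsto (fun y => R * y - c) (𝓝 x) (𝓝 (R * x - c)) :=
      Continuous.tendsto (by fun_prop) x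
    exact this.eventually h
  have hfint : ∀ c, Integrable (fun x => f (R * x - c)) := by
    intro c
    exact (G.fint.comp_sub_right c).comp_mul_left' hR.ne'
  have hloc : ∀ x, ∀ i ∈ Finset.range M, w (R * x - (M + i)) ≠ 0 →
      (1 / 3 < x ∧ ∀ j ∈ Finset.range M, ∀ᶠ y in 𝓝 (R * x - (M + j)), f y = 0) := by
    intro x i hi hw
    constructor
    · have := (G.wsupp _ hw).1
      have hi0 : (0 : ℝ) ≤ i := Nat.cast_nonneg i
      by_contra hx
      have : R * x ≤ R * (1 / 3) := by
        apply mul_le_mul_of_nonneg_left (not_lt.1 hx) hR.le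
      rw [hRdef] at *
      linarith
    · intro j hj
      by_cases hji : j = i
      · rw [hji]; exact G.fw _ hw
      · exact hvan _ (hone x i hi hw j hj hji)
  have hdec : ∀ x, (x < 0 ∨ 1 / 3 < x) →
      (∀ j ∈ Finset.range M, ∀ᶠ y in 𝓝 (R * x - (M + j)), f y = 0) →
      H0 (fun x => gd R⁻¹ x + ∑ i ∈ Finset.range M, f (R * x - (M + i))) x =
        H0 (gd R⁻¹) x + ∑ i ∈ Finset.range M, H0 f (R * x - (M + i)) := by
    intro x hx hj
    rw [H0_add (gd_int _) (integrable_finsetSum _ fun i _ => hfint _) (gd_van hr0 hr hx),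
      H0_sum _ (fun i _ => hfint _) (fun i hi => hvanc _ _ (hj i hi))]
    · congr 1
      exact Finset.sum_congr rfl fun i _ => H0_affine f hR _ x
    · have := (Finset.eventually_all (Finset.range M)).2 fun i hi => hvanc _ _ (hj i hi)
      filter_upwards [this] with y hy
      exact Finset.sum_eq_zero hy
  have hofsum : ∀ x, ENNReal.ofReal (3 * ∑ i ∈ Finset.range M, w (R * x - (M + i))) =
      ∑ i ∈ Finset.range M, 3 * ENNReal.ofReal (w (R * x - (M + i))) := by
    intro x
    rw [ENNReal.ofReal_mul (by norm_num), ENNReal.ofReal_sum_of_nonneg (fun i _ => G.w0 _),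
      Finset.mul_sum]
    simp
  have habs : ∀ x, ENNReal.ofReal |gd R⁻¹ x + ∑ i ∈ Finset.range M, f (R * x - (M + i))| ≤
      ENNReal.ofReal |gd R⁻¹ x| + ∑ i ∈ Finset.range M, ENNReal.ofReal |f (R * x - (M + i))| := by
    intro x
    rw [← ENNReal.ofReal_sum_of_nonneg (fun i _ => abs_nonneg _),
      ← ENNReal.ofReal_add (abs_nonneg _) (Finset.sum_nonneg fun i _ => abs_nonneg _)]
    apply ENNReal.ofReal_le_ofReal
    refine (abs_add_le _ _).trans ?_
    gcongr
    exact Finset.abs_sum_le_sum_abs _ _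
  -- mass of the new weight on an interval
  have hQ : ∀ a b, ∫⁻ y in Ioo a b, ENNReal.ofReal (3 * ∑ i ∈ Finset.range M, w (R * y - (M + i)))
      = 3 * ENNReal.ofReal R⁻¹ * ∑ i ∈ Finset.range M,
        ∫⁻ y in Ioo (R * a - (M + i)) (R * b - (M + i)), ENNReal.ofReal (w y) := by
    intro a b
    simp only [hofsum]
    rw [lintegral_finsetSum _ (fun i _ => by fun_prop), Finset.mul_sum]
    apply Finset.sum_congr rfl
    intro i _
    rw [lintegral_const_mul _ (by fun_prop), lint_affine_set (fun y => ENNReal.ofReal (w y))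
      (by fun_prop) hR, mul_assoc (3 : ℝ≥0∞)]
  have hbr : ∀ a b, a < b → ENNReal.ofReal R⁻¹ * ENNReal.ofReal (R * b - R * a)
      = ENNReal.ofReal (b - a) := by
    intro a b _
    rw [← ENNReal.ofReal_mul hr0.le]
    congr 1
    field_simp
  have hbig : ∀ a b, a < b → 1 / 3 ≤ R * b - R * a →
      ∫⁻ y in Ioo a b, ENNReal.ofReal (3 * ∑ i ∈ Finset.range M, w (R * y - (M + i)))
        ≤ 21 * ENNReal.ofReal (b - a) := by
    intro a b hab h
    rw [hQ]
    calc _ ≤ 3 * ENNReal.ofReal R⁻¹ * (7 * ENNReal.ofReal (R * b - R * a)) := by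
          gcongr
          exact count_sum G.wsupp G.wmass M M (R * a) (R * b) h
      _ = 21 * (ENNReal.ofReal R⁻¹ * ENNReal.ofReal (R * b - R * a)) := by ring
      _ = _ := by rw [hbr a b hab]
  constructor
  · fun_prop
  · intro x
    exact mul_nonneg (by norm_num) (Finset.sum_nonneg fun i _ => G.w0 _)
  · intro x
    by_cases h : 3 * ∑ i ∈ Finset.range M, w (R * x - (M + i)) = 0
    · simp only [h]; positivity
    · obtain ⟨i, hi, hw⟩ := hex x h
      simp only [hone0 x i hi hw]
      have := G.wle (R * x - (M + i))
      rw [pow_succ]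
      linarith
  · intro x hx
    obtain ⟨i, hi, hw⟩ := hex x hx
    refine ⟨(hloc x i hi hw).1.le, ?_⟩
    have h1 := (G.wsupp _ hw).2
    have h2 : (i : ℝ) + 1 ≤ M := by exact_mod_cast Finset.mem_range.1 hi
    by_contra hx
    have : R * (2 / 3) ≤ R * x := by
      apply mul_le_mul_of_nonneg_left (not_le.1 hx).le hR.le
    rw [hRdef] at *
    linarith
  · simp only [hofsum]
    rw [lintegral_finsetSum _ (fun i _ => by fun_prop)]
    have : ∀ i ∈ Finset.range M, ∫⁻ x, 3 * ENNReal.ofReal (w (R * x - (M + i))) =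
        3 * ENNReal.ofReal R⁻¹ := by
      intro i _
      rw [lintegral_const_mul _ (by fun_prop), lint_affine (fun y => ENNReal.ofReal (w y))
        (by fun_prop) hR, G.wmass, mul_one]
    rw [Finset.sum_congr rfl this, Finset.sum_const, Finset.card_range, nsmul_eq_mul, mul_comm,
      h3r]
  · fun_prop
  · exact (gd_int _).add (integrable_finsetSum _ fun i _ => hfint _)
  · intro x hx
    by_cases hg : gd R⁻¹ x = 0
    · have : ∃ i ∈ Finset.range M, f (R * x - (M + i)) ≠ 0 := by
        by_contra h
        push Not at h
        exact hx (by simp only [hg, Finset.sum_eq_zero h, add_zero])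
      obtain ⟨i, hi, hf⟩ := this
      have h1 := G.fsupp _ hf
      have h2 : (i : ℝ) + 1 ≤ M := by exact_mod_cast Finset.mem_range.1 hi
      have hi0 : (0 : ℝ) ≤ i := Nat.cast_nonneg i
      constructor
      · by_contra h
        have : R * x ≤ 0 := mul_nonpos_of_nonneg_of_nonpos hR.le (not_le.1 h).le
        linarith [h1.1]
      · by_contra h
        have : R * 1 ≤ R * x := mul_le_mul_of_nonneg_left (not_lt.1 h) hR.le
        linarith [h1.2]
    · have := gd_supp hr0 hr hg
      exact ⟨this.1, by linarith [this.2]⟩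
  · intro x hx
    obtain ⟨i, hi, hw⟩ := hex x hx
    have h := hloc x i hi hw
    have := (Finset.eventually_all (Finset.range M)).2 fun i hi => hvanc _ _ (h.2 i hi)
    filter_upwards [this, gd_van hr0 hr (Or.inr h.1)] with y hy hg
    simp only [hg, Finset.sum_eq_zero hy, add_zero]
  · fun_prop
  · rw [lintegral_add_left (by fun_prop), lintegral_const_mul _ (by fun_prop),
      lintegral_const_mul _ (by fun_prop), lintegral_finsetSum _ (fun i _ => by fun_prop)]
    have : ∀ i ∈ Finset.range M, ∫⁻ x, F (R * x - (M + i)) =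
        ENNReal.ofReal R⁻¹ * ∫⁻ x, F x := by
      intro i _
      rw [lint_affine F hFm hR]
    rw [Finset.sum_congr rfl this, Finset.sum_const, Finset.card_range, nsmul_eq_mul]
    calc _ ≤ 21 * ENNReal.ofReal (2 * R⁻¹) +
          3 * (M * (ENNReal.ofReal R⁻¹ * (n * ENNReal.ofReal (14 / M)))) := by
          gcongr
          · exact gd_lint hr0
          · exact G.Fmass
      _ = ENNReal.ofReal (14 / M) + (3 * ENNReal.ofReal R⁻¹ * M) * (n * ENNReal.ofReal (14 / M)) := by
          congr 1
          · rw [show (21 : ℝ≥0∞) = ENNReal.ofReal 21 by simp,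
              ← ENNReal.ofReal_mul (by norm_num)]
            congr 1
            rw [hRdef]
            field_simp
            norm_num
          · ring
      _ = _ := by
          rw [h3r]
          push_cast
          ring
  · intro x
    calc _ ≤ (ENNReal.ofReal |gd R⁻¹ x| +
          ∑ i ∈ Finset.range M, ENNReal.ofReal |f (R * x - (M + i))|) * 7 := by
          gcongr
          exact habs x
      _ = 7 * ENNReal.ofReal |gd R⁻¹ x| +
          1 * ∑ i ∈ Finset.range M, ENNReal.ofReal |f (R * x - (M + i))| * 7 := by
          rw [← Finset.sum_mul]; ring
      _ ≤ _ := by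
          gcongr
          · norm_num
          · norm_num
          · exact G.F7 _
  · intro x a b hab hx
    set W := ∫⁻ y in Ioo a b, ENNReal.ofReal (3 * ∑ i ∈ Finset.range M, w (R * y - (M + i)))
      with hW
    have hRab : R * a < R * b := mul_lt_mul_of_pos_left hab hR
    have hxa : R * a ≤ R * x := mul_le_mul_of_nonneg_left hx.1 hR.le
    have hxb : R * x ≤ R * b := mul_le_mul_of_nonneg_left hx.2 hR.le
    have hgW : ENNReal.ofReal |gd R⁻¹ x| * W ≤
        21 * ENNReal.ofReal |gd R⁻¹ x| * ENNReal.ofReal (b - a) := by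
      by_cases hg : gd R⁻¹ x = 0
      · simp [hg]
      have hsup := gd_supp hr0 hr hg
      have : R * x < R * (1 / 3) := mul_lt_mul_of_pos_left hsup.2 hR
      have : W ≤ 21 * ENNReal.ofReal (b - a) := by
        by_cases hall : ∀ j ∈ Finset.range M,
            ∫⁻ y in Ioo (R * a - (M + j)) (R * b - (M + j)), ENNReal.ofReal (w y) = 0
        · rw [hW, hQ, Finset.sum_eq_zero hall, mul_zero]; exact zero_le
        · push Not at hall
          obtain ⟨j, hj, hj0⟩ := hall
          have := far_of_ne G.wsupp hj0
          have hj0 : (0 : ℝ) ≤ j := Nat.cast_nonneg j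
          apply hbig a b hab
          linarith [this.2]
      calc _ ≤ ENNReal.ofReal |gd R⁻¹ x| * (21 * ENNReal.ofReal (b - a)) := by gcongr
        _ = _ := by ring
    have hfW : ∀ i ∈ Finset.range M, ENNReal.ofReal |f (R * x - (M + i))| * W ≤
        3 * F (R * x - (M + i)) * ENNReal.ofReal (b - a) := by
      intro i hi
      by_cases hf : f (R * x - (M + i)) = 0
      · simp [hf]
      have hsup := G.fsupp _ hf
      by_cases hall : ∀ j ∈ Finset.range M, j ≠ i →
            ∫⁻ y in Ioo (R * a - (M + j)) (R * b - (M + j)), ENNReal.ofReal (w y) = 0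
      · rw [hW, hQ, Finset.sum_eq_single i hall (fun h => absurd hi h), ← hbr a b hab]
        have h := G.FQ (R * x - (M + i)) (R * a - (M + i)) (R * b - (M + i)) (by linarith)
          ⟨by linarith, by linarith⟩
        rw [sub_sub_sub_cancel_right] at h
        calc _ = 3 * ENNReal.ofReal R⁻¹ * (ENNReal.ofReal |f (R * x - (M + i))| *
              ∫⁻ y in Ioo (R * a - (M + i)) (R * b - (M + i)), ENNReal.ofReal (w y)) := by ring
          _ ≤ 3 * ENNReal.ofReal R⁻¹ * (F (R * x - (M + i)) * ENNReal.ofReal (R * b - R * a)) := by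
              gcongr
          _ = _ := by ring
      · push Not at hall
        obtain ⟨j, hj, hji, hj0⟩ := hall
        have hfar := far_of_ne G.wsupp hj0
        have hb : 1 / 3 ≤ R * b - R * a := by
          rcases lt_or_gt_of_ne hji with h' | h'
          · have : (j : ℝ) + 1 ≤ i := by exact_mod_cast h'
            linarith [hfar.1]
          · have : (i : ℝ) + 1 ≤ j := by exact_mod_cast h'
            linarith [hfar.2]
        calc _ ≤ ENNReal.ofReal |f (R * x - (M + i))| * (21 * ENNReal.ofReal (b - a)) := by
              gcongr
              exact hbig a b hab hb
          _ = 3 * (ENNReal.ofReal |f (R * x - (M + i))| * 7) * ENNReal.ofReal (b - a) := by ring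
          _ ≤ _ := by
              gcongr
              exact G.F7 _
    calc _ ≤ (ENNReal.ofReal |gd R⁻¹ x| +
          ∑ i ∈ Finset.range M, ENNReal.ofReal |f (R * x - (M + i))|) * W := by
          gcongr
          exact habs x
      _ = ENNReal.ofReal |gd R⁻¹ x| * W +
          ∑ i ∈ Finset.range M, ENNReal.ofReal |f (R * x - (M + i))| * W := by
          rw [add_mul, Finset.sum_mul]
      _ ≤ 21 * ENNReal.ofReal |gd R⁻¹ x| * ENNReal.ofReal (b - a) +
          ∑ i ∈ Finset.range M, 3 * F (R * x - (M + i)) * ENNReal.ofReal (b - a) :=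
          add_le_add hgW (Finset.sum_le_sum hfW)
      _ = _ := by rw [← Finset.sum_mul, ← Finset.mul_sum, ← add_mul]
  · intro x hx
    have hout : ∀ j ∈ Finset.range M, (R * x - (M + j) ≤ -1 / 3 ∨ 4 / 3 ≤ R * x - (M + j)) := by
      intro j hj
      have h2 : (j : ℝ) + 1 ≤ M := by exact_mod_cast Finset.mem_range.1 hj
      have hj0 : (0 : ℝ) ≤ j := Nat.cast_nonneg j
      rcases hx with h | h
      · left
        have : R * x ≤ R * (-1 / 3) := mul_le_mul_of_nonneg_left h hR.le
        linarith
      · right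
        have : R * (4 / 3) ≤ R * x := mul_le_mul_of_nonneg_left h hR.le
        linarith
    have hx' : x < 0 ∨ 1 / 3 < x := hx.imp (fun h => by linarith) (fun h => by linarith)
    rw [hdec x hx' fun j hj => hvan _ (hout j hj)]
    refine add_nonneg (le_trans ?_ (H0_gd hr0 hr hx'))
      (Finset.sum_nonneg fun j hj => G.Hpos _ (hout j hj))
    rw [sub_nonneg, div_eq_mul_one_div, div_eq_mul_one_div R⁻¹ (x - 1 / 3 + R⁻¹)]
    apply mul_le_mul_of_nonneg_left _ hr0.le
    rcases hx with h | h
    · exact one_div_le_one_div_of_neg_of_le (by linarith) (by linarith)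
    · exact one_div_le_one_div_of_le (by linarith) (by linarith)
  · have hkey : ∀ x, ∀ i ∈ Finset.range M, w (R * x - (M + i)) ≠ 0 →
        Xg M i + H0 f (R * x - (M + i)) ≤
          H0 (fun x => gd R⁻¹ x + ∑ i ∈ Finset.range M, f (R * x - (M + i))) x := by
      intro x i hi hw
      have h := hloc x i hi hw
      rw [hdec x (Or.inr h.1) h.2]
      have h1 := H0_gd hr0 hr (Or.inr h.1)
      have h2 : H0 f (R * x - (M + i)) ≤ ∑ j ∈ Finset.range M, H0 f (R * x - (M + j)) := by
        rw [← Finset.add_sum_erase _ _ hi]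
        have : 0 ≤ ∑ j ∈ (Finset.range M).erase i, H0 f (R * x - (M + j)) := by
          apply Finset.sum_nonneg
          intro j hj
          rw [Finset.mem_erase] at hj
          exact G.Hpos _ (hone x i hi hw j hj.2 hj.1)
        linarith
      have h3 : Xg M i ≤ R⁻¹ / (x - 1 / 3 + R⁻¹) - R⁻¹ / (x - R⁻¹) := by
        have hs := G.wsupp _ hw
        have hi0 : (0 : ℝ) ≤ i := Nat.cast_nonneg i
        have e1 : R⁻¹ / (x - 1 / 3 + R⁻¹) = 1 / (R * x - M + 1) := by
          have : x - 1 / 3 + R⁻¹ = R⁻¹ * (R * x - M + 1) := by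
            have : R⁻¹ * M = 1 / 3 := by rw [hRdef]; field_simp
            linear_combination (-x) * hRr + this
          rw [this, div_mul_eq_div_div, div_self hr0.ne']
        have e2 : R⁻¹ / (x - R⁻¹) = 1 / (R * x - 1) := by
          have : x - R⁻¹ = R⁻¹ * (R * x - 1) := by
            linear_combination (-x) * hRr
          rw [this, div_mul_eq_div_div, div_self hr0.ne']
        rw [e1, e2, Xg]
        apply sub_le_sub
        · exact one_div_le_one_div_of_le (by linarith) (by linarith)
        · exact one_div_le_one_div_of_le (by linarith) (by linarith)
      linarith
    have hHm := H0_measurable hfm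
    have hHm' : Measurable (H0 (fun x => gd R⁻¹ x + ∑ i ∈ Finset.range M, f (R * x - (M + i)))) :=
      H0_measurable (by fun_prop)
    simp only [hofsum, Finset.sum_mul]
    rw [lintegral_finsetSum _ (fun i _ => by fun_prop)]
    have hterm : ∀ i ∈ Finset.range M,
        ∫⁻ x, 3 * ENNReal.ofReal (w (R * x - (M + i))) * ENNReal.ofReal (Real.exp
          (-H0 (fun x => gd R⁻¹ x + ∑ i ∈ Finset.range M, f (R * x - (M + i))) x)) ≤
        3 * ENNReal.ofReal (Real.exp (-Xg M i)) * (ENNReal.ofReal R⁻¹ * ENNReal.ofReal ρ ^ n) := by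
      intro i hi
      calc _ ≤ ∫⁻ x, 3 * ENNReal.ofReal (Real.exp (-Xg M i)) *
            (fun t => ENNReal.ofReal (w t) * ENNReal.ofReal (Real.exp (-H0 f t)))
              (R * x - (M + i)) := by
            apply lintegral_mono
            intro x
            by_cases hw : w (R * x - (M + i)) = 0
            · simp [hw]
            have := hkey x i hi hw
            calc _ ≤ 3 * ENNReal.ofReal (w (R * x - (M + i))) *
                  (ENNReal.ofReal (Real.exp (-Xg M i)) *
                    ENNReal.ofReal (Real.exp (-H0 f (R * x - (M + i))))) := by
                  rw [← ENNReal.ofReal_mul (Real.exp_pos _).le, ← Real.exp_add]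
                  exact mul_le_mul' le_rfl
                    (ENNReal.ofReal_le_ofReal (Real.exp_le_exp.2 (by linarith)))
              _ = _ := by ring
        _ = 3 * ENNReal.ofReal (Real.exp (-Xg M i)) * (ENNReal.ofReal R⁻¹ *
              ∫⁻ t, ENNReal.ofReal (w t) * ENNReal.ofReal (Real.exp (-H0 f t))) := by
            rw [lintegral_const_mul _ (by fun_prop), lint_affine
              (fun t => ENNReal.ofReal (w t) * ENNReal.ofReal (Real.exp (-H0 f t)))
              (by fun_prop) hR]
        _ ≤ _ := by
            gcongr
            exact G.Hexp
    calc _ ≤ ∑ i ∈ Finset.range M, 3 * ENNReal.ofReal (Real.exp (-Xg M i)) *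
          (ENNReal.ofReal R⁻¹ * ENNReal.ofReal ρ ^ n) := Finset.sum_le_sum hterm
      _ = ENNReal.ofReal (∑ i ∈ Finset.range M, Real.exp (-Xg M i)) *
          (3 * ENNReal.ofReal R⁻¹ * ENNReal.ofReal ρ ^ n) := by
          rw [ENNReal.ofReal_sum_of_nonneg (fun i _ => (Real.exp_pos _).le), Finset.sum_mul]
          apply Finset.sum_congr rfl
          intro i _
          ring
      _ ≤ ENNReal.ofReal (ρ * M) * (3 * ENNReal.ofReal R⁻¹ * ENNReal.ofReal ρ ^ n) := by
          gcongr
      _ = (3 * ENNReal.ofReal R⁻¹ * M) * (ENNReal.ofReal ρ ^ (n + 1)) := by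
          rw [ENNReal.ofReal_mul' hM0.le, ENNReal.ofReal_natCast]
          ring
      _ = _ := by rw [h3r, one_mul]

lemma good_exists {M : ℕ} {ρ : ℝ} (hM : 3 ≤ M)
    (hρ : ∑ i ∈ Finset.range M, Real.exp (-Xg M i) ≤ ρ * M) (n : ℕ) :
    ∃ w f F, Good M n ρ w f F := by
  induction n with
  | zero => exact ⟨_, _, _, good_zero M ρ⟩
  | succ n ih =>
    obtain ⟨w, f, F, G⟩ := ih
    exact ⟨_, _, _, good_step hM hρ G⟩

lemma Good.orlicz {M n : ℕ} {ρ : ℝ} {w f : ℝ → ℝ} {F : ℝ → ℝ≥0∞} (G : Good M n ρ w f F)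
    {Φ : ℝ → ℝ} {κ : ℝ} (hκ : 1 ≤ κ) (hΦ : ∀ t, 0 ≤ t → t ≤ 3 ^ (n + 1) → Φ t ≤ κ * t) (x : ℝ) :
    ENNReal.ofReal |f x| * MOrlicz Φ w x ≤ ENNReal.ofReal κ * F x := by
  have hκ0 : 0 < κ := by linarith
  simp only [MOrlicz, ENNReal.mul_iSup]
  refine iSup_le fun a => iSup_le fun b => iSup_le fun hab => iSup_le fun hx => ?_
  have hba : 0 < b - a := by linarith
  set I := ∫⁻ y in Ioo a b, ENNReal.ofReal (w y) with hI
  have hItop : I ≠ ⊤ := by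
    refine ne_top_of_le_ne_top ENNReal.one_ne_top ?_
    rw [← G.wmass]
    exact setLIntegral_le_lintegral _ _
  set m := I.toReal / (b - a) with hm
  have hm0 : 0 ≤ m := by positivity
  have hIm : I = ENNReal.ofReal (m * (b - a)) := by
    rw [hm, div_mul_cancel₀ _ hba.ne', ENNReal.ofReal_toReal hItop]
  set l := κ * max 1 m with hl
  have hl1 : 1 ≤ l := by
    rw [hl]
    nlinarith [le_max_left 1 m]
  have hl0 : 0 < l := by linarith
  have hmem : ENNReal.ofReal l ∈ {lam : ℝ≥0∞ | ∃ l : ℝ, 0 < l ∧ lam = ENNReal.ofReal l ∧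
      (∫⁻ y in Ioo a b, ENNReal.ofReal (Φ (|w y| / l))) ≤ ENNReal.ofReal (b - a)} := by
    refine ⟨l, hl0, rfl, ?_⟩
    calc _ ≤ ∫⁻ y in Ioo a b, ENNReal.ofReal (κ / l) * ENNReal.ofReal (w y) := by
          apply lintegral_mono
          intro y
          simp only
          rw [← ENNReal.ofReal_mul (by positivity), abs_of_nonneg (G.w0 y)]
          apply ENNReal.ofReal_le_ofReal
          have h1 : w y / l ≤ 3 ^ (n + 1) :=
            (div_le_self (G.w0 y) hl1).trans (G.wle y)
          refine (hΦ _ (div_nonneg (G.w0 y) hl0.le) h1).trans (le_of_eq ?_)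
          ring
      _ = ENNReal.ofReal (κ / l) * I := by
          rw [lintegral_const_mul _ (G.wm.ennreal_ofReal)]
      _ ≤ ENNReal.ofReal (b - a) := by
          rw [hIm, ← ENNReal.ofReal_mul (by positivity)]
          apply ENNReal.ofReal_le_ofReal
          rw [← mul_assoc]
          refine mul_le_of_le_one_left hba.le ?_
          rw [div_mul_eq_mul_div, div_le_one hl0, hl]
          exact mul_le_mul_of_nonneg_left (le_max_right _ _) hκ0.le
  calc _ ≤ ENNReal.ofReal |f x| * ENNReal.ofReal l := by
        gcongr
        exact sInf_le hmem
    _ = ENNReal.ofReal κ * (ENNReal.ofReal |f x| * max 1 (ENNReal.ofReal m)) := by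
        rw [hl, ENNReal.ofReal_mul hκ0.le, ENNReal.ofReal_max, ENNReal.ofReal_one]
        ring
    _ ≤ _ := by
        gcongr
        rcases max_cases 1 (ENNReal.ofReal m) with h | h
        · rw [h.1, mul_one]
          refine le_trans ?_ (G.F7 x)
          exact le_mul_of_one_le_right zero_le (by norm_num)
        · rw [h.1]
          have h2 := G.FQ x a b hab hx
          rw [← hI, hIm, ENNReal.ofReal_mul hm0, ← mul_assoc] at h2
          have hb0 : ENNReal.ofReal (b - a) ≠ 0 := by simpa using hba
          exact (ENNReal.mul_le_mul_iff_left hb0 ENNReal.ofReal_ne_top).1 h2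

lemma exp_neg_le {x : ℝ} (h0 : 0 ≤ x) (h1 : x ≤ 1) : Real.exp (-x) ≤ 1 - x / 2 := by
  rw [Real.exp_neg]
  have h := Real.add_one_le_exp x
  have hx : 0 < x + 1 := by linarith
  calc (Real.exp x)⁻¹ ≤ (x + 1)⁻¹ := inv_anti₀ hx h
    _ ≤ 1 - x / 2 := by
      rw [inv_le_iff_one_le_mul₀ hx]
      nlinarith

lemma Xg_bounds {M : ℕ} (hM : 3 ≤ M) (i : ℕ) : 0 ≤ Xg M i ∧ Xg M i ≤ 1 := by
  have hM' : (3 : ℝ) ≤ M := by exact_mod_cast hM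
  have hi0 : (0 : ℝ) ≤ i := Nat.cast_nonneg i
  unfold Xg
  constructor
  · rw [sub_nonneg]
    exact one_div_le_one_div_of_le (by linarith) (by linarith)
  · have h1 : 1 / ((i : ℝ) + 2) ≤ 1 := by
      rw [div_le_one (by linarith)]; linarith
    have h2 : 0 ≤ 1 / ((M : ℝ) - 1 + i) := by
      apply div_nonneg zero_le_one; linarith
    linarith

lemma sum_log (M : ℕ) :
    Real.log ((M : ℝ) + 2) - Real.log 2 ≤ ∑ i ∈ Finset.range M, 1 / ((i : ℝ) + 2) := by
  induction M with
  | zero => simp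
  | succ M ih =>
    rw [Finset.sum_range_succ]
    have h2 : (0 : ℝ) < (M : ℝ) + 2 := by positivity
    have h : Real.log (((M : ℝ) + 3) / ((M : ℝ) + 2)) ≤ 1 / ((M : ℝ) + 2) := by
      refine (Real.log_le_sub_one_of_pos (by positivity)).trans (le_of_eq ?_)
      field_simp
      ring
    rw [Real.log_div (by positivity) (by positivity)] at h
    have e : ((M + 1 : ℕ) : ℝ) + 2 = (M : ℝ) + 3 := by push_cast; ring
    rw [e]
    linarith

lemma sum_Xg {M : ℕ} (hM : 3 ≤ M) : Real.log M - 5 / 2 ≤ ∑ i ∈ Finset.range M, Xg M i := by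
  have hM' : (3 : ℝ) ≤ M := by exact_mod_cast hM
  unfold Xg
  rw [Finset.sum_sub_distrib]
  have h1 := sum_log M
  have h2 : ∑ i ∈ Finset.range M, 1 / ((M : ℝ) - 1 + i) ≤ 3 / 2 := by
    calc _ ≤ ∑ i ∈ Finset.range M, 1 / ((M : ℝ) - 1) := by
          apply Finset.sum_le_sum
          intro i _
          have hi0 : (0 : ℝ) ≤ i := Nat.cast_nonneg i
          exact one_div_le_one_div_of_le (by linarith) (by linarith)
      _ = M * (1 / ((M : ℝ) - 1)) := by simp
      _ ≤ 3 / 2 := by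
          rw [mul_one_div, div_le_div_iff₀ (by linarith) (by norm_num)]
          linarith
  have h3 : Real.log M ≤ Real.log ((M : ℝ) + 2) := Real.log_le_log (by linarith) (by linarith)
  have h4 : Real.log 2 ≤ 1 := by
    have := Real.log_two_lt_d9
    linarith
  linarith

lemma loglog_le {M : ℕ} (hM : 4 ≤ M) {t : ℝ} (ht0 : 0 ≤ t) (ht : t ≤ 3 ^ (M + 1)) :
    Real.log (Real.log (Real.exp (Real.exp 1) + t)) ≤ 2 * Real.log M := by
  have hM' : (4 : ℝ) ≤ M := by exact_mod_cast hM
  have he : Real.exp 1 ≤ 3 := by linarith [Real.exp_one_lt_d9]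
  have he2 : (2 : ℝ) ≤ Real.exp 1 := by linarith [Real.exp_one_gt_d9]
  have h3 : (3 : ℝ) ≤ Real.exp 2 := by
    have := Real.add_one_le_exp 2
    linarith
  have h1 : Real.exp (Real.exp 1) + t ≤ Real.exp ((M : ℝ) ^ 2) := by
    have a1 : Real.exp (Real.exp 1) ≤ Real.exp 3 := Real.exp_le_exp.2 he
    have a2 : t ≤ Real.exp (2 * (M + 1 : ℕ)) := by
      rw [mul_comm, Real.exp_nat_mul]
      exact ht.trans (pow_le_pow_left₀ (by norm_num) h3 _)
    have a3 : (2 : ℝ) ≤ Real.exp 3 := by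
      have := Real.add_one_le_exp 3
      linarith
    have a4 : (2 : ℝ) ≤ Real.exp (2 * (M + 1 : ℕ)) := by
      have := Real.add_one_le_exp (2 * (M + 1 : ℕ) : ℝ)
      push_cast at this ⊢
      linarith
    calc _ ≤ Real.exp 3 + Real.exp (2 * (M + 1 : ℕ)) := by linarith
      _ ≤ Real.exp 3 * Real.exp (2 * (M + 1 : ℕ)) := by nlinarith
      _ ≤ _ := by
        rw [← Real.exp_add]
        apply Real.exp_le_exp.2
        push_cast
        nlinarith
  have hpos : 0 < Real.exp (Real.exp 1) + t := by
    have := Real.exp_pos (Real.exp 1)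
    linarith
  have h2 : Real.log (Real.exp (Real.exp 1) + t) ≤ (M : ℝ) ^ 2 := by
    rw [Real.log_le_iff_le_exp hpos]
    exact h1
  have h4 : 0 < Real.log (Real.exp (Real.exp 1) + t) := by
    apply Real.log_pos
    have := Real.add_one_le_exp (Real.exp 1)
    linarith
  refine (Real.log_le_log h4 h2).trans (le_of_eq ?_)
  rw [Real.log_pow]
  norm_num

lemma phi_bound {Φ : ℝ → ℝ} (hΦ : IsYoung Φ) (hlim : Tendsto
      (fun t => Φ t / (t * Real.log (Real.log (Real.exp (Real.exp 1) + t))))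
      atTop (𝓝 0)) {ε : ℝ} (hε : 0 < ε) :
    ∃ B : ℝ, ∀ M : ℕ, 4 ≤ M → ∀ t, 0 ≤ t → t ≤ 3 ^ (M + 1) →
      Φ t ≤ max (max 1 B) (2 * ε * Real.log M) * t := by
  obtain ⟨T0, hT0⟩ := eventually_atTop.1 (hlim.eventually (gt_mem_nhds hε))
  set T := max T0 1 with hT
  have hTpos : 0 < T := lt_of_lt_of_le one_pos (le_max_right _ _)
  refine ⟨Φ T / T, fun M hM t ht0 ht => ?_⟩
  rcases eq_or_lt_of_le ht0 with h0 | h0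
  · rw [← h0, hΦ.map_zero, mul_zero]
  rcases le_total t T with h | h
  · have hc := hΦ.convexOn.2 (mem_Ici.2 hTpos.le) (mem_Ici.2 le_rfl)
      (div_nonneg ht0 hTpos.le) (sub_nonneg.2 ((div_le_one hTpos).2 h)) (by ring)
    simp only [smul_eq_mul, mul_zero, add_zero, hΦ.map_zero, div_mul_cancel₀ _ hTpos.ne'] at hc
    calc Φ t ≤ t / T * Φ T := hc
      _ = Φ T / T * t := by ring
      _ ≤ _ := by
        gcongr
        exact (le_max_right _ _).trans (le_max_left _ _)
  · have h1 := hT0 t ((le_max_left _ _).trans h)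
    have hl : 0 < Real.log (Real.log (Real.exp (Real.exp 1) + t)) := by
      apply Real.log_pos
      rw [Real.lt_log_iff_exp_lt (by positivity)]
      have : Real.exp 1 < Real.exp (Real.exp 1) := by
        apply Real.exp_lt_exp.2
        linarith [Real.exp_one_gt_d9]
      linarith
    rw [div_lt_iff₀ (by positivity)] at h1
    have h2 := loglog_le hM ht0 ht
    calc Φ t ≤ ε * (t * Real.log (Real.log (Real.exp (Real.exp 1) + t))) := h1.le
      _ ≤ ε * (t * (2 * Real.log M)) := by gcongr
      _ = (2 * ε * Real.log M) * t := by ring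
      _ ≤ _ := by
        gcongr
        exact le_max_right _ _

lemma Good.level {M n : ℕ} {ρ : ℝ} {w f : ℝ → ℝ} {F : ℝ → ℝ≥0∞} (G : Good M n ρ w f F)
    {lam : ℝ} (h : ENNReal.ofReal (Real.exp lam) * ENNReal.ofReal ρ ^ n ≤ 1 / 2) :
    1 / 2 ≤ ∫⁻ x in {x : ℝ | lam < |Hil f x|}, ENNReal.ofReal (w x) := by
  have hHm := H0_measurable G.fm
  have hwm := G.wm
  have hS : MeasurableSet {x : ℝ | lam < H0 f x} := measurableSet_lt measurable_const hHm
  have hS' : MeasurableSet {x : ℝ | w x ≠ 0} := hwm (measurableSet_singleton 0).compl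
  have h1 := lintegral_add_compl (μ := volume) (fun x => ENNReal.ofReal (w x)) hS
  rw [G.wmass] at h1
  have h2 : ∫⁻ x in {x : ℝ | lam < H0 f x}ᶜ, ENNReal.ofReal (w x) ≤ 1 / 2 := by
    calc _ ≤ ∫⁻ x in {x : ℝ | lam < H0 f x}ᶜ, ENNReal.ofReal (Real.exp lam) *
          (ENNReal.ofReal (w x) * ENNReal.ofReal (Real.exp (-H0 f x))) := by
          apply setLIntegral_mono (by fun_prop)
          intro x hx
          have hx' : H0 f x ≤ lam := not_lt.1 hx
          rw [mul_left_comm, ← ENNReal.ofReal_mul (Real.exp_pos _).le, ← Real.exp_add]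
          apply le_mul_of_one_le_right zero_le
          rw [ENNReal.one_le_ofReal]
          exact Real.one_le_exp (by linarith)
      _ ≤ ∫⁻ x, ENNReal.ofReal (Real.exp lam) *
          (ENNReal.ofReal (w x) * ENNReal.ofReal (Real.exp (-H0 f x))) :=
          setLIntegral_le_lintegral _ _
      _ ≤ ENNReal.ofReal (Real.exp lam) * ENNReal.ofReal ρ ^ n := by
          rw [lintegral_const_mul _ (by fun_prop)]
          gcongr
          exact G.Hexp
      _ ≤ _ := h
  have h3 : ∫⁻ x in {x : ℝ | lam < H0 f x}, ENNReal.ofReal (w x) ≤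
      ∫⁻ x in {x : ℝ | lam < |Hil f x|}, ENNReal.ofReal (w x) := by
    have e : ∫⁻ x in {x : ℝ | lam < H0 f x}, ENNReal.ofReal (w x) =
        ∫⁻ x in {x : ℝ | w x ≠ 0} ∩ {x : ℝ | lam < H0 f x}, ENNReal.ofReal (w x) := by
      rw [← Measure.restrict_restrict hS', ← lintegral_indicator hS']
      congr 1
      ext x
      by_cases hx : w x = 0
      · simp [indicator, hx]
      · simp [indicator, hx]
    rw [e]
    apply lintegral_mono_set
    intro x hx
    have : Hil f x = H0 f x := Hil_eq (G.fw x hx.1)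
    show lam < |Hil f x|
    rw [this]
    exact lt_of_lt_of_le hx.2 (le_abs_self _)
  refine le_trans ?_ h3
  by_contra hlt
  push Not at hlt
  have : (1 : ℝ≥0∞) < 1 / 2 + 1 / 2 := by
    calc (1 : ℝ≥0∞) = _ := h1.symm
      _ < 1 / 2 + 1 / 2 := ENNReal.add_lt_add_of_lt_of_le (by
          refine ne_top_of_le_ne_top ?_ h2
          simp) hlt h2
  rw [ENNReal.add_halves] at this
  exact lt_irrefl _ this

/-- If `Φ` is a Young function with
`Φ(t)/(t log log(e^e + t)) → 0` as `t → ∞`, then for every `c > 0` there are a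
weight `w`, a function `f` with `∫ |f| M_Φ w < ∞`, and `λ > 0` such that
`w({|Hf| > λ}) > (c/λ) ∫ |f| M_Φ w`. -/
theorem statement0 (Φ : ℝ → ℝ) (hΦ : IsYoung Φ)
    (hlim : Tendsto
      (fun t => Φ t / (t * Real.log (Real.log (Real.exp (Real.exp 1) + t))))
      atTop (𝓝 0))
    (c : ℝ) (hc : 0 < c) :
    ∃ (w f : ℝ → ℝ) (lam : ℝ), IsWeight w ∧ 0 < lam ∧
      (∫⁻ x, ENNReal.ofReal |f x| * MOrlicz Φ w x) < ⊤ ∧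
      ENNReal.ofReal (c / lam) * (∫⁻ x, ENNReal.ofReal |f x| * MOrlicz Φ w x)
        < ∫⁻ x in {x : ℝ | lam < |Hil f x|}, ENNReal.ofReal (w x) := by
  obtain ⟨B, hB⟩ := phi_bound hΦ hlim (ε := 1 / (500 * (c + 1))) (by positivity)
  obtain ⟨M, hM4, hMlog⟩ : ∃ M : ℕ, 4 ≤ M ∧
      max 12 (max (224 * c) (224 * c * B)) < Real.log M := by
    have h1 : Tendsto (fun n : ℕ => Real.log n) atTop atTop :=
      Real.tendsto_log_atTop.comp tendsto_natCast_atTop_atTop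
    exact ((eventually_ge_atTop 4).and (h1.eventually_gt_atTop _)).exists
  have hM3 : 3 ≤ M := by omega
  have hM0 : (0 : ℝ) < M := by exact_mod_cast (by omega : 0 < M)
  have hlog12 : 12 < Real.log M := (le_max_left _ _).trans_lt hMlog
  have hlog1 : 224 * c < Real.log M :=
    ((le_max_left _ _).trans (le_max_right _ _)).trans_lt hMlog
  have hlog2 : 224 * c * B < Real.log M :=
    ((le_max_right _ _).trans (le_max_right _ _)).trans_lt hMlog
  set K := ∑ i ∈ Finset.range M, Xg M i with hK
  have hK1 : Real.log M - 5 / 2 ≤ K := sum_Xg hM3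
  have hK2 : Real.log M / 2 < K := by linarith
  have hK4 : 4 ≤ K := by linarith
  set ρ := Real.exp (-(K / (2 * M))) with hρdef
  have hρ : ∑ i ∈ Finset.range M, Real.exp (-Xg M i) ≤ ρ * M := by
    calc _ ≤ ∑ i ∈ Finset.range M, (1 - Xg M i / 2) :=
          Finset.sum_le_sum fun i _ => exp_neg_le (Xg_bounds hM3 i).1 (Xg_bounds hM3 i).2
      _ = (-(K / (2 * M)) + 1) * M := by
          rw [Finset.sum_sub_distrib, ← Finset.sum_div, ← hK]
          simp only [Finset.sum_const, Finset.card_range, nsmul_eq_mul, mul_one]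
          field_simp
          ring
      _ ≤ ρ * M := by
          gcongr
          exact Real.add_one_le_exp _
  obtain ⟨w, f, F, G⟩ := good_exists hM3 hρ M
  set κ := max (max 1 B) (2 * (1 / (500 * (c + 1))) * Real.log M) with hκ
  have hκ1 : 1 ≤ κ := (le_max_left _ _).trans (le_max_left _ _)
  have hκK : 224 * c * κ < Real.log M := by
    have hc' : (0 : ℝ) < 224 * c := by positivity
    rw [hκ, mul_max_of_nonneg _ _ hc'.le, mul_max_of_nonneg _ _ hc'.le]
    refine max_lt (max_lt (by linarith) hlog2) ?_
    have : 224 * c * (2 * (1 / (500 * (c + 1))) * Real.log M) =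
        (448 * c / (500 * (c + 1))) * Real.log M := by ring
    rw [this]
    have h2 : 448 * c / (500 * (c + 1)) < 1 := by
      rw [div_lt_one (by positivity)]
      linarith
    nlinarith
  have hcost : ∫⁻ x, ENNReal.ofReal |f x| * MOrlicz Φ w x ≤ ENNReal.ofReal (14 * κ) := by
    calc _ ≤ ∫⁻ x, ENNReal.ofReal κ * F x :=
          lintegral_mono fun x => G.orlicz hκ1 (fun t ht0 ht => hB M hM4 t ht0 ht) x
      _ = ENNReal.ofReal κ * ∫⁻ x, F x := lintegral_const_mul _ G.Fm
      _ ≤ ENNReal.ofReal κ * (M * ENNReal.ofReal (14 / M)) := by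
          gcongr
          exact G.Fmass
      _ = ENNReal.ofReal (14 * κ) := by
          rw [← ENNReal.ofReal_natCast, ← ENNReal.ofReal_mul hM0.le,
            ← ENNReal.ofReal_mul (by linarith)]
          congr 1
          field_simp
  have hlev : 1 / 2 ≤ ∫⁻ x in {x : ℝ | K / 4 < |Hil f x|}, ENNReal.ofReal (w x) := by
    apply G.level
    rw [← ENNReal.ofReal_pow (Real.exp_pos _).le, ← Real.exp_nat_mul,
      ← ENNReal.ofReal_mul (Real.exp_pos _).le, ← Real.exp_add]
    have e : K / 4 + M * -(K / (2 * M)) = -(K / 4) := by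
      field_simp
      ring
    rw [e]
    have h1 : Real.exp (-(K / 4)) ≤ 1 / 2 := by
      have := exp_neg_le (x := 1) (by norm_num) le_rfl
      refine (Real.exp_le_exp.2 (by linarith : -(K / 4) ≤ -1)).trans ?_
      linarith
    refine (ENNReal.ofReal_le_ofReal h1).trans (le_of_eq ?_)
    rw [ENNReal.ofReal_div_of_pos (by norm_num)]
    simp
  refine ⟨w, f, K / 4, ⟨G.w0, ?_⟩, by linarith, hcost.trans_lt ENNReal.ofReal_lt_top, ?_⟩
  · apply Integrable.locallyIntegrable
    refine ⟨G.wm.aestronglyMeasurable, ?_⟩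
    rw [hasFiniteIntegral_iff_ofReal (Eventually.of_forall G.w0), G.wmass]
    exact ENNReal.one_lt_top
  · refine lt_of_lt_of_le ?_ hlev
    calc _ ≤ ENNReal.ofReal (c / (K / 4)) * ENNReal.ofReal (14 * κ) := by gcongr
      _ = ENNReal.ofReal (c / (K / 4) * (14 * κ)) := by
          rw [← ENNReal.ofReal_mul (by positivity)]
      _ < ENNReal.ofReal (1 / 2) := by
          rw [ENNReal.ofReal_lt_ofReal_iff (by norm_num)]
          have : c / (K / 4) * (14 * κ) = 56 * c * κ / K := by
            field_simp
            ring
          rw [this, div_lt_iff₀ (by linarith)]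
          linarith
      _ = 1 / 2 := by
          rw [ENNReal.ofReal_div_of_pos (by norm_num)]
          simp

end RT

end
end

section
/- Let w : ℝ → [0,∞) be a locally integrable function that vanishes outside ∪_{l≥1} Ω_l, is constant on each set Ω_l, satisfies ∫_{[0,1]} w dx = 1, and satisfies ∫_I w dx = ∫_J w dx for every l ≥ 1, every I ∈ ℐ_l, and every J ∈ 𝒥_{l+1}. Then w(x) = Σ_{l=1}^∞ (3^k/(3^{k−1}+1))^l · χ_{Ω_l}(x) for almost every x. -/
open MeasureTheory Set Filter Topology
open scoped ENNReal

noncomputable section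

namespace RT

theorem triadic_eq {I J : ℝ × ℝ} (hI : IsTriadic I) (hJ : IsTriadic J) (h : len I = len J)
    {x : ℝ} (hxI : x ∈ ivl I) (hxJ : x ∈ ivl J) : I = J := by
  obtain ⟨a, b⟩ := I
  obtain ⟨c, d⟩ := J
  obtain ⟨j, n, h1, h2⟩ := hI
  obtain ⟨j', n', h1', h2'⟩ := hJ
  simp only [len, ivl, mem_Ico] at *
  have hp : (0 : ℝ) < (3 : ℝ) ^ j := by positivity
  have e : (3 : ℝ) ^ j' = (3 : ℝ) ^ j := by
    subst h1 h2 h1' h2'; linarith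
  rw [e] at h1' h2'
  subst h1 h2 h1' h2'
  have a1 : (n : ℝ) < n' + 1 := by
    have := lt_of_le_of_lt hxI.1 hxJ.2
    exact lt_of_mul_lt_mul_left this hp.le
  have a2 : (n' : ℝ) < n + 1 := by
    have := lt_of_le_of_lt hxJ.1 hxI.2
    exact lt_of_mul_lt_mul_left this hp.le
  have : n = n' := by
    have a1' : n < n' + 1 := by exact_mod_cast a1
    have a2' : n' < n + 1 := by exact_mod_cast a2
    omega
  rw [this]

theorem len_pos_of_triadic {I : ℝ × ℝ} (hI : IsTriadic I) : 0 < len I := by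
  obtain ⟨j, n, h1, h2⟩ := hI
  have hp : (0 : ℝ) < (3 : ℝ) ^ j := by positivity
  rw [len, h1, h2]; linarith

theorem mid_subset {J : ℝ × ℝ} (hJ : 0 < len J) : ivl (mid J) ⊆ ivl J := by
  intro x hx
  simp only [ivl, mid, len, mem_Ico] at *
  constructor <;> linarith [hx.1, hx.2]

theorem Jfam_props (k l : ℕ) : ∀ J ∈ Jfam k (l + 1),
    IsTriadic J ∧ len J = 1 / 3 ^ (k * l) ∧ ivl J ⊆ Ico (0 : ℝ) 1 := by
  induction l with
  | zero =>
    intro J hJ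
    simp only [Jfam, mem_singleton_iff] at hJ
    subst hJ
    refine ⟨⟨0, 0, by simp, by simp⟩, by simp [len], by simp [ivl]⟩
  | succ l ih =>
    intro J hJ
    obtain ⟨ht, J', hJ', hl, hs⟩ := hJ
    obtain ⟨a, b, c⟩ := ih J' hJ'
    refine ⟨ht, ?_, hs.trans ((mid_subset (len_pos_of_triadic a)).trans c)⟩
    rw [hl, b, div_div, ← pow_add]; rfl

theorem Jfam_anc (k l m : ℕ) (h : l < m) : ∀ J ∈ Jfam k (m + 1),
    ∃ J' ∈ Jfam k (l + 1), ivl J ⊆ ivl (mid J') := by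
  induction m, h using Nat.le_induction with
  | base =>
    intro J hJ
    obtain ⟨ht, J', hJ', hl, hs⟩ := hJ
    exact ⟨J', hJ', hs⟩
  | succ m hm ih =>
    intro J hJ
    obtain ⟨ht, J', hJ', hl, hs⟩ := hJ
    obtain ⟨K, hK, hKs⟩ := ih J' hJ'
    exact ⟨K, hK, hs.trans ((mid_subset (len_pos_of_triadic (Jfam_props k m J' hJ').1)).trans hKs)⟩

theorem Jfam_eq {k l : ℕ} {I J : ℝ × ℝ} (hI : I ∈ Jfam k (l + 1)) (hJ : J ∈ Jfam k (l + 1))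
    {x : ℝ} (hxI : x ∈ ivl I) (hxJ : x ∈ ivl J) : I = J := by
  obtain ⟨a, b, -⟩ := Jfam_props k l I hI
  obtain ⟨a', b', -⟩ := Jfam_props k l J hJ
  exact triadic_eq a a' (b.trans b'.symm) hxI hxJ

theorem P_props {k : ℕ} (hk : 2 ≤ k) {P : ℝ × ℝ → ℝ × ℝ} (hP : GoodP k P) {l : ℕ} {J : ℝ × ℝ}
    (hJ : J ∈ Jfam k (l + 1)) :
    ivl (P J) ⊆ ivl J ∧ Disjoint (ivl (P J)) (ivl (mid J)) ∧
      len (P J) = 1 / 3 ^ (k * (l + 1)) := by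
  obtain ⟨a, b, c⟩ := Jfam_props k l J hJ
  obtain ⟨d, e, f⟩ := hP J a c
  have hpos := len_pos_of_triadic a
  have h9 : len (P J) ≤ len J / 3 := by
    rw [e]
    apply div_le_div_of_nonneg_left hpos.le (by norm_num)
    calc (3 : ℝ) = 3 ^ 1 := by norm_num
      _ ≤ 3 ^ k := pow_le_pow_right₀ (by norm_num) (by omega)
  refine ⟨?_, ?_, ?_⟩
  · intro x hx
    simp only [ivl, mid, len, mem_Ico] at *
    rcases f with f | f <;> constructor <;> linarith [hx.1, hx.2]
  · rw [Set.disjoint_left]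
    intro x hx hx'
    simp only [ivl, mid, len, mem_Ico] at *
    rcases f with f | f <;> linarith [hx.1, hx.2, hx'.1, hx'.2]
  · rw [e, b, div_div, ← pow_add]; rfl

theorem mem_Omega {k : ℕ} {P : ℝ × ℝ → ℝ × ℝ} {l : ℕ} {x : ℝ} :
    x ∈ Omega k P l ↔ ∃ J ∈ Jfam k l, x ∈ ivl (P J) := by
  simp only [Omega, Ifam, mem_iUnion, mem_image, exists_prop, exists_exists_and_eq_and]

theorem P_mid_disj {k : ℕ} (hk : 2 ≤ k) {P : ℝ × ℝ → ℝ × ℝ} (hP : GoodP k P) {l : ℕ}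
    {J J' : ℝ × ℝ} (hJ : J ∈ Jfam k (l + 1)) (hJ' : J' ∈ Jfam k (l + 1)) {x : ℝ}
    (h : x ∈ ivl (P J)) (h' : x ∈ ivl (mid J')) : False := by
  obtain ⟨a, b, -⟩ := P_props hk hP hJ
  have hp := len_pos_of_triadic (Jfam_props k l J' hJ').1
  have := Jfam_eq hJ hJ' (a h) (mid_subset hp h')
  subst this
  exact Set.disjoint_left.1 b h h'

theorem Omega_lt {k : ℕ} (hk : 2 ≤ k) {P : ℝ × ℝ → ℝ × ℝ} (hP : GoodP k P) {l m : ℕ}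
    (hlm : l < m) {x : ℝ} (h : x ∈ Omega k P (l + 1)) (h' : x ∈ Omega k P (m + 1)) : False := by
  obtain ⟨J, hJ, hx⟩ := mem_Omega.1 h
  obtain ⟨J2, hJ2, hx2⟩ := mem_Omega.1 h'
  obtain ⟨J', hJ', hs⟩ := Jfam_anc k l m hlm J2 hJ2
  exact P_mid_disj hk hP hJ hJ' hx (hs ((P_props hk hP hJ2).1 hx2))

theorem Omega_eq {k : ℕ} (hk : 2 ≤ k) {P : ℝ × ℝ → ℝ × ℝ} (hP : GoodP k P) {l m : ℕ}
    {x : ℝ} (h : x ∈ Omega k P (l + 1)) (h' : x ∈ Omega k P (m + 1)) : m = l := by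
  rcases lt_trichotomy l m with hlt | heq | hgt
  · exact (Omega_lt hk hP hlt h h').elim
  · exact heq.symm
  · exact (Omega_lt hk hP hgt h' h).elim

theorem in_J {k : ℕ} (hk : 2 ≤ k) {P : ℝ × ℝ → ℝ × ℝ} (hP : GoodP k P) {l m : ℕ}
    {J : ℝ × ℝ} (hJ : J ∈ Jfam k (l + 1))
    {x : ℝ} (hx : x ∈ ivl J) (h' : x ∈ Omega k P (m + 1)) : x ∈ ivl (P J) ∪ ivl (mid J) := by
  obtain ⟨J2, hJ2, hx2⟩ := mem_Omega.1 h'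
  have hx3 := (P_props hk hP hJ2).1 hx2
  rcases lt_trichotomy l m with hlt | heq | hgt
  · obtain ⟨J', hJ', hs⟩ := Jfam_anc k l m hlt J2 hJ2
    have hp := len_pos_of_triadic (Jfam_props k l J' hJ').1
    have := Jfam_eq hJ hJ' hx (mid_subset hp (hs hx3))
    subst this
    exact Or.inr (hs hx3)
  · subst heq
    have := Jfam_eq hJ hJ2 hx hx3
    subst this
    exact Or.inl hx2
  · obtain ⟨J', hJ', hs⟩ := Jfam_anc k m l hgt J hJ
    exact (P_mid_disj hk hP hJ2 hJ' hx2 (hs hx)).elim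

/-- left endpoints of the children of `J` -/
def cpt (k : ℕ) (J : ℝ × ℝ) (i : ℕ) : ℝ := (mid J).1 + i * (len J / 3 ^ k)

theorem cpt_last {k : ℕ} (hk : 2 ≤ k) (J : ℝ × ℝ) : cpt k J (3 ^ (k - 1)) = (mid J).2 := by
  obtain ⟨m, rfl⟩ : ∃ m, k = m + 1 := ⟨k - 1, by omega⟩
  simp only [cpt, mid, len, Nat.add_sub_cancel]
  push_cast
  rw [pow_succ]
  field_simp
  ring

theorem cpt_mono {k : ℕ} {J : ℝ × ℝ} (hJ : 0 < len J) : Monotone (cpt k J) := by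
  intro a b h
  have h' : (a : ℝ) ≤ b := by exact_mod_cast h
  have : 0 ≤ len J / 3 ^ k := by positivity
  simp only [cpt]
  gcongr

theorem child_mem {k : ℕ} (hk : 2 ≤ k) {l : ℕ} {J : ℝ × ℝ} (hJ : J ∈ Jfam k (l + 1)) {i : ℕ}
    (hi : i < 3 ^ (k - 1)) : (cpt k J i, cpt k J (i + 1)) ∈ Jfam k (l + 2) := by
  obtain ⟨a, b, c⟩ := Jfam_props k l J hJ
  have hpos := len_pos_of_triadic a
  refine ⟨?_, J, hJ, ?_, ?_⟩
  · obtain ⟨j, n, h1, h2⟩ := a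
    obtain ⟨m, rfl⟩ : ∃ m, k = m + 1 := ⟨k - 1, by omega⟩
    refine ⟨j - (m + 1 : ℕ), (3 * n + 1) * 3 ^ m + i, ?_, ?_⟩
    all_goals
      rw [zpow_sub₀ (by norm_num), zpow_natCast]
      simp only [cpt, mid, len, h1, h2]
      push_cast
      rw [pow_succ]
      field_simp
      ring
  · simp only [len, cpt]; push_cast; ring
  · intro x hx
    have h0 := cpt_mono (k := k) hpos (Nat.zero_le i)
    have h1 := cpt_mono (k := k) hpos (show i + 1 ≤ 3 ^ (k - 1) from hi)
    rw [cpt_last hk] at h1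
    have h2 : cpt k J 0 = (mid J).1 := by simp [cpt]
    rw [h2] at h0
    exact ⟨h0.trans hx.1, hx.2.trans_le h1⟩

theorem int_mid {k : ℕ} (hk : 2 ≤ k) {J : ℝ × ℝ} (hJ : 0 < len J) {w : ℝ → ℝ}
    (hw : LocallyIntegrable w volume) :
    (∫ x in ivl (mid J), w x) =
      ∑ i ∈ Finset.range (3 ^ (k - 1)), ∫ x in ivl (cpt k J i, cpt k J (i + 1)), w x := by
  have hI : ∀ a b : ℝ, IntervalIntegrable w volume a b := fun a b =>
    (hw.integrableOn_isCompact isCompact_uIcc).intervalIntegrable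
  have hm : ∀ a b : ℝ, a ≤ b → (∫ x in ivl (a, b), w x) = ∫ x in a..b, w x := by
    intro a b h
    rw [intervalIntegral.integral_of_le h, ivl, integral_Ico_eq_integral_Ioc]
  have h2 : cpt k J 0 = (mid J).1 := by simp [cpt]
  have key := intervalIntegral.sum_integral_adjacent_intervals (μ := volume) (f := w)
    (a := cpt k J) (n := 3 ^ (k - 1)) (fun _ _ => hI _ _)
  rw [cpt_last hk, h2] at key
  rw [show mid J = ((mid J).1, (mid J).2) from rfl, hm, ← key]
  · exact Finset.sum_congr rfl fun i _ => (hm _ _ (cpt_mono hJ (Nat.le_succ i))).symm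
  · rw [← h2, ← cpt_last hk]; exact cpt_mono hJ (Nat.zero_le _)

theorem Jfam_nonempty {k : ℕ} (hk : 2 ≤ k) (l : ℕ) : (Jfam k (l + 1)).Nonempty := by
  induction l with
  | zero => exact ⟨_, rfl⟩
  | succ l ih =>
    obtain ⟨J, hJ⟩ := ih
    exact ⟨_, child_mem hk hJ (i := 0) (by positivity)⟩

theorem int_J {k : ℕ} (hk : 2 ≤ k) {P : ℝ × ℝ → ℝ × ℝ} (hP : GoodP k P)
    {w : ℝ → ℝ} (hwloc : LocallyIntegrable w volume)
    (hsupp : ∀ x : ℝ, x ∉ (⋃ l : ℕ, Omega k P (l + 1)) → w x = 0)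
    {l : ℕ} {J : ℝ × ℝ} (hJ : J ∈ Jfam k (l + 1)) :
    (∫ x in ivl J, w x) = (∫ x in ivl (P J), w x) + ∫ x in ivl (mid J), w x := by
  have hpos := len_pos_of_triadic (Jfam_props k l J hJ).1
  obtain ⟨a, b, -⟩ := P_props hk hP hJ
  have hI : ∀ I : ℝ × ℝ, IntegrableOn w (ivl I) volume := fun I =>
    (hwloc.integrableOn_isCompact isCompact_Icc).mono_set Ico_subset_Icc_self
  rw [← setIntegral_union b measurableSet_Ico (hI _) (hI _)]
  apply setIntegral_eq_of_subset_of_forall_sdiff_eq_zero measurableSet_Ico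
    (union_subset a (mid_subset hpos))
  intro x hx
  apply hsupp
  intro h
  obtain ⟨m, hm⟩ := mem_iUnion.1 h
  exact hx.2 (in_J hk hP hJ hx.1 hm)

/-- **Lemma 2.1, uniqueness form.** If a nonnegative locally
integrable `w` vanishes outside `⋃_{l≥1} Ω_l`, is constant on each `Ω_l`, has
`∫_{[0,1]} w = 1`, and satisfies `∫_I w = ∫_J w` for all `l ≥ 1`, `I ∈ ℐ_l`,
`J ∈ 𝒥_{l+1}`, then `w = ∑_{l≥1} (3^k/(3^{k-1}+1))^l χ_{Ω_l}` a.e. -/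
theorem statement1 (k : ℕ) (hk : 2 ≤ k) (P : ℝ × ℝ → ℝ × ℝ) (hP : GoodP k P)
    (w : ℝ → ℝ) (hw0 : ∀ x, 0 ≤ w x) (hwloc : LocallyIntegrable w volume)
    (hsupp : ∀ x : ℝ, x ∉ (⋃ l : ℕ, Omega k P (l + 1)) → w x = 0)
    (hconst : ∀ l : ℕ, ∃ a : ℝ, ∀ x ∈ Omega k P (l + 1), w x = a)
    (hnorm : (∫ x in Icc (0:ℝ) 1, w x) = 1)
    (hbal : ∀ l : ℕ, 1 ≤ l → ∀ I ∈ Ifam k P l, ∀ J ∈ Jfam k (l + 1),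
      (∫ x in ivl I, w x) = ∫ x in ivl J, w x) :
    ∀ᵐ x : ℝ, w x = wk k P x := by
  have hint : ∀ l : ℕ, ∀ J ∈ Jfam k (l + 1),
      (∫ x in ivl J, w x) = 1 / ((3 : ℝ) ^ (k - 1) + 1) ^ l := by
    intro l
    induction l with
    | zero =>
      intro J hJ
      simp only [Jfam, mem_singleton_iff] at hJ
      subst hJ
      rw [ivl, ← integral_Icc_eq_integral_Ico, hnorm]; simp
    | succ l ih =>
      intro J' hJ'
      have hJ'' := hJ'
      obtain ⟨ht, J, hJ, hl, hs⟩ := hJ''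
      have h1 := ih J hJ
      have hpos := len_pos_of_triadic (Jfam_props k l J hJ).1
      rw [int_J hk hP hwloc hsupp hJ, int_mid hk hpos hwloc] at h1
      have hb := fun K hK => hbal (l + 1) (by omega) (P J) ⟨J, hJ, rfl⟩ K hK
      rw [Finset.sum_congr rfl (fun i hi =>
        ((hb _ (child_mem hk hJ (Finset.mem_range.1 hi))).symm.trans (hb J' hJ'))),
        hb J' hJ', Finset.sum_const, Finset.card_range, nsmul_eq_mul] at h1
      push_cast at h1
      have hp : (0 : ℝ) < (3 : ℝ) ^ (k - 1) + 1 := by positivity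
      rw [pow_succ, ← div_div, ← h1, eq_div_iff hp.ne']
      ring
  have hval : ∀ l : ℕ, ∀ x ∈ Omega k P (l + 1), w x = alpha k ^ (l + 1) := by
    intro l x hx
    obtain ⟨a, ha⟩ := hconst l
    rw [ha x hx]
    obtain ⟨J, hJ, hxJ⟩ := mem_Omega.1 hx
    obtain ⟨K, hK⟩ := Jfam_nonempty hk (l + 1)
    have h1 := (hbal (l + 1) (by omega) (P J) ⟨J, hJ, rfl⟩ K hK).trans (hint (l + 1) K hK)
    have h2 : (∫ x in ivl (P J), w x) = ∫ x in ivl (P J), a :=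
      setIntegral_congr_fun measurableSet_Ico fun y hy => ha y (mem_Omega.2 ⟨J, hJ, hy⟩)
    have h3 := (P_props hk hP hJ).2.2
    have h4 : 0 ≤ len (P J) := by rw [h3]; positivity
    rw [h2, setIntegral_const, measureReal_def, ivl, Real.volume_Ico] at h1
    rw [show (P J).2 - (P J).1 = len (P J) from rfl, ENNReal.toReal_ofReal h4, h3,
      smul_eq_mul] at h1
    have hp : (0 : ℝ) < (3 : ℝ) ^ (k - 1) + 1 := by positivity
    rw [alpha, div_pow, ← pow_mul]
    field_simp at h1 ⊢
    linarith
  refine Eventually.of_forall fun x => ?_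
  by_cases hx : x ∈ ⋃ l : ℕ, Omega k P (l + 1)
  · obtain ⟨l, hl⟩ := mem_iUnion.1 hx
    rw [hval l x hl, wk, tsum_eq_single l]
    · simp [hl]
    · intro m hm
      have : x ∉ Omega k P (m + 1) := fun h => hm (Omega_eq hk hP hl h)
      simp [this]
  · rw [hsupp x hx, wk]
    have : ∀ l, x ∉ Omega k P (l + 1) := fun l h => hx (mem_iUnion.2 ⟨l, h⟩)
    simp [this]

end RT

end
end

section
/- The function w_k(x) = Σ_{l=1}^∞ (3^k/(3^{k−1}+1))^l · χ_{Ω_l}(x) satisfies ∫_{[0,1]} w_k dx = 1, and for every l ≥ 1, every I ∈ ℐ_l, and every J ∈ 𝒥_{l+1}, one has ∫_I w_k dx = ∫_J w_k dx. -/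
open MeasureTheory Set Filter Topology
open scoped ENNReal

noncomputable section

namespace RT

/-- The triadic cell of length `3^{-km}` with index `n`. -/
def cell (k m : ℕ) (n : ℤ) : ℝ × ℝ := ((n : ℝ) / 3 ^ (k * m), ((n : ℝ) + 1) / 3 ^ (k * m))

/-- Index set of the family `𝒥_{m+1}`. -/
def Sidx (k : ℕ) : ℕ → ℤ → Prop
  | 0, n => n = 0
  | m + 1, n => ∃ q : ℤ, Sidx k m q ∧ 3 ^ k * q + 3 ^ (k - 1) ≤ n ∧ n < 3 ^ k * q + 2 * 3 ^ (k - 1)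

lemma three_pow {R : Type*} [CommRing R] {k : ℕ} (hk : 2 ≤ k) : (3 : R) ^ k = 3 * 3 ^ (k - 1) := by
  obtain ⟨j, rfl⟩ : ∃ j, k = j + 1 := ⟨k - 1, by omega⟩
  simp [pow_succ, mul_comm]

lemma L_pos (k m : ℕ) : (0 : ℝ) < 3 ^ (k * m) := by positivity

lemma L_succ (k m : ℕ) : (3 : ℝ) ^ (k * (m + 1)) = 3 ^ k * 3 ^ (k * m) := by
  rw [Nat.mul_succ, pow_add, mul_comm]

lemma mem_cell {k m : ℕ} {n : ℤ} {x : ℝ} :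
    x ∈ ivl (cell k m n) ↔ ⌊x * 3 ^ (k * m)⌋ = n := by
  have h := L_pos k m
  simp only [ivl, cell, mem_Ico, Int.floor_eq_iff, div_le_iff₀ h, lt_div_iff₀ h]

lemma floor_step {k m : ℕ} {x : ℝ} {q : ℤ}
    (h1 : 3 ^ k * q ≤ ⌊x * 3 ^ (k * (m + 1))⌋) (h2 : ⌊x * 3 ^ (k * (m + 1))⌋ < 3 ^ k * (q + 1)) :
    ⌊x * 3 ^ (k * m)⌋ = q := by
  have hp : (0 : ℝ) < 3 ^ k := by positivity
  rw [Int.le_floor] at h1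
  rw [Int.floor_lt] at h2
  rw [L_succ] at h1 h2
  push_cast at h1 h2
  rw [Int.floor_eq_iff]
  constructor
  · have : (3:ℝ) ^ k * q ≤ 3 ^ k * (x * 3 ^ (k * m)) := by linarith
    exact le_of_mul_le_mul_left this hp
  · have : (3:ℝ) ^ k * (x * 3 ^ (k * m)) < 3 ^ k * (q + 1) := by linarith
    exact lt_of_mul_lt_mul_left this hp.le

/-- The union of the intervals of `𝒥_{m+1}`. -/
def Dset (k m : ℕ) : Set ℝ := {x | Sidx k m ⌊x * 3 ^ (k * m)⌋}

lemma D_step {k m : ℕ} (hk : 2 ≤ k) : Dset k (m + 1) ⊆ Dset k m := by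
  rintro x ⟨q, hq, h1, h2⟩
  have hM : (0 : ℤ) < 3 ^ (k - 1) := by positivity
  have h3 := three_pow (R := ℤ) hk
  have : ⌊x * 3 ^ (k * m)⌋ = q := floor_step (by linarith) (by linarith)
  simpa [Dset, this] using hq

lemma D_anti {k : ℕ} (hk : 2 ≤ k) : Antitone (Dset k) := antitone_nat_of_succ_le fun _ => D_step hk

lemma cell_sub {k m : ℕ} {n : ℤ} (h : Sidx k m n) : ivl (cell k m n) ⊆ Dset k m := by
  intro x hx
  rw [mem_cell] at hx
  simpa [Dset, hx] using h

lemma D_zero (k : ℕ) : Dset k 0 = Ico 0 1 := by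
  ext x
  simp [Dset, Sidx, Int.floor_eq_iff]

lemma Jfam_eq_s2 {k : ℕ} (hk : 2 ≤ k) (m : ℕ) :
    ∀ J, J ∈ Jfam k (m + 1) ↔ ∃ n, Sidx k m n ∧ J = cell k m n := by
  induction m with
  | zero => intro J; simp [Jfam, Sidx, cell]
  | succ m ih =>
    intro J'
    have hp : (0 : ℝ) < 3 ^ k := by positivity
    have hL := L_pos k m
    have hL1 := L_pos k (m + 1)
    have h3 := three_pow (R := ℝ) hk
    have hlen : ∀ q, len (cell k m q) / 3 ^ k = 1 / 3 ^ (k * (m + 1)) := by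
      intro q
      rw [L_succ]
      simp only [len, cell]
      field_simp
      ring
    have hmid1 : ∀ q : ℤ, (mid (cell k m q)).1
        = ((3 ^ k * q + 3 ^ (k - 1) : ℤ) : ℝ) / 3 ^ (k * (m + 1)) := by
      intro q
      rw [L_succ]
      simp only [mid, cell]
      push_cast
      rw [h3]
      field_simp
      ring
    have hmid2 : ∀ q : ℤ, (mid (cell k m q)).2
        = ((3 ^ k * q + 2 * 3 ^ (k - 1) : ℤ) : ℝ) / 3 ^ (k * (m + 1)) := by
      intro q
      rw [L_succ]
      simp only [mid, cell]
      push_cast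
      rw [h3]
      field_simp
      ring
    have key : ∀ q n : ℤ, ivl (cell k (m + 1) n) ⊆ ivl (mid (cell k m q)) ↔
        3 ^ k * q + 3 ^ (k - 1) ≤ n ∧ n < 3 ^ k * q + 2 * 3 ^ (k - 1) := by
      intro q n
      have hlt : (cell k (m + 1) n).1 < (cell k (m + 1) n).2 := by
        simp only [cell]; gcongr; linarith
      rw [ivl, ivl, Ico_subset_Ico_iff hlt, hmid1, hmid2]
      simp only [cell]
      rw [div_le_div_iff_of_pos_right hL1, div_le_div_iff_of_pos_right hL1, ← Int.add_one_le_iff]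
      norm_cast
    have hun : Jfam k (m + 1 + 1) = {J' | IsTriadic J' ∧ ∃ J ∈ Jfam k (m + 1),
      len J' = len J / 3 ^ k ∧ ivl J' ⊆ ivl (mid J)} := rfl
    rw [hun]
    constructor
    · rintro ⟨⟨j, n, hn1, hn2⟩, J, hJ, hl, hs⟩
      obtain ⟨q, hq, rfl⟩ := (ih J).1 hJ
      rw [hlen] at hl
      have hj : (3 : ℝ) ^ j = 1 / 3 ^ (k * (m + 1)) := by
        rw [← hl, len, hn1, hn2]; ring
      have hJ' : J' = cell k (m + 1) n := by
        ext
        · rw [hn1, hj]; simp only [cell]; ring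
        · rw [hn2, hj]; simp only [cell]; ring
      subst hJ'
      exact ⟨n, ⟨q, hq, (key q n).1 hs⟩, rfl⟩
    · rintro ⟨n, ⟨q, hq, hqn⟩, rfl⟩
      refine ⟨⟨-((k * (m + 1) : ℕ) : ℤ), n, ?_, ?_⟩, cell k m q, (ih _).2 ⟨q, hq, rfl⟩, ?_,
        (key q n).2 hqn⟩
      · rw [zpow_neg, zpow_natCast]; simp only [cell]; ring
      · rw [zpow_neg, zpow_natCast]; simp only [cell]; ring
      · rw [hlen]; simp only [len, cell]; ring

lemma P_cell {k : ℕ} (hk : 2 ≤ k) {P : ℝ × ℝ → ℝ × ℝ} (hP : GoodP k P) {m : ℕ} {n : ℤ}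
    (hn : Sidx k m n) : ∃ r : ℤ, P (cell k m n) = cell k (m + 1) r ∧
      (r + 1 = 3 ^ k * n + 3 ^ (k - 1) ∨ r = 3 ^ k * n + 2 * 3 ^ (k - 1)) := by
  have hp : (0 : ℝ) < 3 ^ k := by positivity
  have hL := L_pos k m
  have h3 := three_pow (R := ℝ) hk
  have hM : (0 : ℝ) < 3 ^ (k - 1) := by positivity
  obtain ⟨-, hl, h⟩ := hP (cell k m n)
    ⟨-((k * m : ℕ) : ℤ), n, by rw [zpow_neg, zpow_natCast]; simp only [cell]; ring,
      by rw [zpow_neg, zpow_natCast]; simp only [cell]; ring⟩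
    ((cell_sub hn).trans ((D_anti hk (Nat.zero_le m)).trans (D_zero k).le))
  simp only [len] at hl
  rcases h with h | h
  · refine ⟨3 ^ k * n + 3 ^ (k - 1) - 1, ?_, Or.inl (by ring)⟩
    have h1 : (P (cell k m n)).1 = (mid (cell k m n)).1 -
      ((cell k m n).2 - (cell k m n).1) / 3 ^ k := by linarith
    ext
    · rw [h1]; simp only [cell, mid]; rw [L_succ]; push_cast; rw [h3]; field_simp; ring
    · rw [h]; simp only [cell, mid]; rw [L_succ]; push_cast; rw [h3]; field_simp; ring
  · refine ⟨3 ^ k * n + 2 * 3 ^ (k - 1), ?_, Or.inr (by ring)⟩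
    have h1 : (P (cell k m n)).2 = (mid (cell k m n)).2 +
      ((cell k m n).2 - (cell k m n).1) / 3 ^ k := by linarith
    ext
    · rw [h]; simp only [cell, mid]; rw [L_succ]; push_cast; rw [h3]; field_simp; ring
    · rw [h1]; simp only [cell, mid]; rw [L_succ]; push_cast; rw [h3]; field_simp; ring

lemma mem_Omega_s2 {k : ℕ} (hk : 2 ≤ k) {P : ℝ × ℝ → ℝ × ℝ} {m : ℕ} {x : ℝ} :
    x ∈ Omega k P (m + 1) ↔ ∃ n, Sidx k m n ∧ x ∈ ivl (P (cell k m n)) := by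
  simp only [Omega, Ifam, mem_iUnion, mem_image, exists_prop, Jfam_eq_s2 hk]
  constructor
  · rintro ⟨_, ⟨_, ⟨n, hn, rfl⟩, rfl⟩, hx⟩
    exact ⟨n, hn, hx⟩
  · rintro ⟨n, hn, hx⟩
    exact ⟨_, ⟨_, ⟨n, hn, rfl⟩, rfl⟩, hx⟩

lemma mem_PJ {k : ℕ} (hk : 2 ≤ k) {P : ℝ × ℝ → ℝ × ℝ} (hP : GoodP k P) {m : ℕ} {n : ℤ}
    (hn : Sidx k m n) {x : ℝ} (hx : x ∈ ivl (P (cell k m n))) :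
    x ∈ ivl (cell k m n) ∧ x ∉ Dset k (m + 1) := by
  obtain ⟨r, hr, hr'⟩ := P_cell hk hP hn
  rw [hr, mem_cell] at hx
  have hM : (0 : ℤ) < 3 ^ (k - 1) := by positivity
  have h3 := three_pow (R := ℤ) hk
  have hfl : ⌊x * 3 ^ (k * m)⌋ = n := by
    apply floor_step
    · rw [hx]; rcases hr' with h | h <;> linarith
    · rw [hx]; rcases hr' with h | h <;> linarith
  refine ⟨mem_cell.2 hfl, ?_⟩
  rintro ⟨q, hq, h1, h2⟩
  have hfq : ⌊x * 3 ^ (k * m)⌋ = q := floor_step (by linarith) (by linarith)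
  rw [hfl] at hfq
  subst hfq
  rw [hx] at h1 h2
  rcases hr' with h | h <;> linarith

lemma Omega_sub {k : ℕ} (hk : 2 ≤ k) {P : ℝ × ℝ → ℝ × ℝ} (hP : GoodP k P) {m : ℕ} {x : ℝ}
    (hx : x ∈ Omega k P (m + 1)) : x ∈ Dset k m ∧ x ∉ Dset k (m + 1) := by
  obtain ⟨n, hn, hx⟩ := (mem_Omega_s2 hk).1 hx
  have := mem_PJ hk hP hn hx
  exact ⟨cell_sub hn this.1, this.2⟩

lemma Omega_meas {k : ℕ} (hk : 2 ≤ k) (P : ℝ × ℝ → ℝ × ℝ) (m : ℕ) :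
    MeasurableSet (Omega k P (m + 1)) := by
  have : Omega k P (m + 1) = ⋃ n : ℤ, ⋃ _ : Sidx k m n, ivl (P (cell k m n)) := by
    ext x; simp [mem_Omega_s2 hk]
  rw [this]
  exact MeasurableSet.iUnion fun n => MeasurableSet.iUnion fun _ => measurableSet_Ico

lemma vol_cell (k m : ℕ) (n : ℤ) : volume.real (ivl (cell k m n)) = 1 / 3 ^ (k * m) := by
  have hL := L_pos k m
  simp only [ivl, cell]
  rw [Real.volume_real_Ico_of_le (by gcongr; linarith)]
  ring

lemma meas_cell (k m : ℕ) (n : ℤ) : MeasurableSet (ivl (cell k m n)) := measurableSet_Ico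

lemma vol_cell_ne (k m : ℕ) (n : ℤ) : volume (ivl (cell k m n)) ≠ ⊤ := by
  simp [ivl]

lemma vol_Omega {k : ℕ} (hk : 2 ≤ k) {P : ℝ × ℝ → ℝ × ℝ} (hP : GoodP k P) (j : ℕ) :
    ∀ (m : ℕ) (n : ℤ), Sidx k m n →
      volume.real (Omega k P (m + j + 1) ∩ ivl (cell k m n))
        = (3 ^ (k - 1)) ^ j / 3 ^ (k * (m + j + 1)) := by
  induction j with
  | zero =>
    intro m n hn
    have : Omega k P (m + 0 + 1) ∩ ivl (cell k m n) = ivl (P (cell k m n)) := by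
      ext x
      constructor
      · rintro ⟨h1, h2⟩
        obtain ⟨n', hn', hx⟩ := (mem_Omega_s2 hk).1 h1
        have h := (mem_PJ hk hP hn' hx).1
        rw [mem_cell] at h h2
        rw [h] at h2
        subst h2
        exact hx
      · intro hx
        exact ⟨(mem_Omega_s2 hk).2 ⟨n, hn, hx⟩, (mem_PJ hk hP hn hx).1⟩
    rw [this]
    obtain ⟨r, hr, -⟩ := P_cell hk hP hn
    rw [hr, vol_cell]
    simp
  | succ j ih =>
    intro m n hn
    have hM : (0 : ℤ) < 3 ^ (k - 1) := by positivity
    have h3 := three_pow (R := ℤ) hk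
    set T := Finset.Ico (3 ^ k * n + 3 ^ (k - 1)) (3 ^ k * n + 2 * 3 ^ (k - 1)) with hT
    have hS : ∀ i ∈ T, Sidx k (m + 1) i := by
      intro i hi
      rw [hT, Finset.mem_Ico] at hi
      exact ⟨n, hn, hi⟩
    have hidx : m + (j + 1) + 1 = m + 1 + j + 1 := by ring
    rw [hidx]
    have hU : Omega k P (m + 1 + j + 1) ∩ ivl (cell k m n) =
        ⋃ i ∈ T, Omega k P (m + 1 + j + 1) ∩ ivl (cell k (m + 1) i) := by
      ext x
      simp only [mem_iUnion, mem_inter_iff, exists_prop]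
      constructor
      · rintro ⟨h1, h2⟩
        have hD := D_anti hk (show m + 1 ≤ m + 1 + j by omega) (Omega_sub hk hP h1).1
        obtain ⟨q, hq, ha, hb⟩ := hD
        have hfq : ⌊x * 3 ^ (k * m)⌋ = q := floor_step (by linarith) (by linarith)
        rw [mem_cell, hfq] at h2
        subst h2
        exact ⟨_, Finset.mem_Ico.2 ⟨ha, hb⟩, h1, mem_cell.2 rfl⟩
      · rintro ⟨i, hi, h1, h2⟩
        refine ⟨h1, ?_⟩
        rw [hT, Finset.mem_Ico] at hi
        rw [mem_cell] at h2 ⊢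
        exact floor_step (by linarith) (by linarith)
    rw [hU, measureReal_biUnion_finset (h := fun i _ => measure_ne_top_of_subset inter_subset_right (vol_cell_ne _ _ _))]
    · rw [Finset.sum_congr rfl fun i hi => ih (m + 1) i (hS i hi)]
      rw [Finset.sum_const, hT, Int.card_Ico, nsmul_eq_mul]
      have : (3 ^ k * n + 2 * 3 ^ (k - 1) - (3 ^ k * n + 3 ^ (k - 1)) : ℤ)
          = ((3 ^ (k - 1) : ℕ) : ℤ) := by push_cast; ring
      rw [this, Int.toNat_natCast]
      push_cast
      ring
    · intro a _ b _ hab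
      refine Set.disjoint_left.2 ?_
      rintro x ⟨_, h1⟩ ⟨_, h2⟩
      rw [mem_cell] at h1 h2
      exact hab (h1.symm.trans h2)
    · intro i _
      exact (Omega_meas hk P _).inter (meas_cell _ _ _)

lemma int_cell {k : ℕ} (hk : 2 ≤ k) {P : ℝ × ℝ → ℝ × ℝ} (hP : GoodP k P) {m : ℕ} {n : ℤ}
    (hn : Sidx k m n) :
    ∫ x in ivl (cell k m n), wk k P x = (1 / (3 ^ (k - 1) + 1)) ^ m := by
  have hM : (0 : ℝ) < 3 ^ (k - 1) := by positivity
  have hα : 0 < alpha k := by unfold alpha; positivity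
  set F : ℕ → ℝ → ℝ := fun l x =>
    alpha k ^ (l + 1) * (Omega k P (l + 1)).indicator (fun _ => (1 : ℝ)) x with hF
  have hFnn : ∀ l x, 0 ≤ F l x := fun l x =>
    mul_nonneg (by positivity) (indicator_nonneg (fun _ _ => zero_le_one) _)
  have hFint : ∀ l, Integrable (F l) (volume.restrict (ivl (cell k m n))) := by
    intro l
    have : IsFiniteMeasure (volume.restrict (ivl (cell k m n))) :=
      ⟨by rw [Measure.restrict_apply_univ]; exact (vol_cell_ne _ _ _).lt_top⟩
    exact ((integrable_const (1 : ℝ)).indicator (Omega_meas hk P l)).const_mul _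
  have hFval : ∀ l, ∫ x in ivl (cell k m n), F l x =
      alpha k ^ (l + 1) * volume.real (Omega k P (l + 1) ∩ ivl (cell k m n)) := by
    intro l
    simp only [hF]
    rw [integral_const_mul, integral_indicator_const _ (Omega_meas hk P l),
      measureReal_restrict_apply (Omega_meas hk P l)]
    simp
  have hsum : HasSum (fun l => ∫ x in ivl (cell k m n), F l x) ((1 / (3 ^ (k - 1) + 1)) ^ m) := by
    simp only [hFval]
    have hinj : Function.Injective (fun j : ℕ => m + j) := add_right_injective m
    rw [← hinj.hasSum_iff]
    · set c : ℝ := 3 ^ (k - 1) / (3 ^ (k - 1) + 1) with hc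
      have hc1 : c < 1 := by rw [hc, div_lt_one (by positivity)]; linarith
      have hg := (hasSum_geometric_of_lt_one (by positivity) hc1).mul_left
        ((1 / (3 ^ (k - 1) + 1 : ℝ)) ^ (m + 1))
      have h1 : (1 / (3 ^ (k - 1) + 1 : ℝ)) ^ (m + 1) * (1 - c)⁻¹ =
          (1 / (3 ^ (k - 1) + 1)) ^ m := by
        have : 1 - c = 1 / (3 ^ (k - 1) + 1) := by rw [hc]; field_simp; ring
        rw [this, pow_succ]
        field_simp
      rw [h1] at hg
      refine Eq.mp (congrArg (fun f : ℕ → ℝ => HasSum f _) ?_) hg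
      funext j
      symm
      have : (3 : ℝ) ^ k ≠ 0 := by positivity
      simp only [Function.comp]
      rw [vol_Omega hk hP j m n hn, alpha, pow_mul, hc]
      simp only [div_pow, one_pow]
      field_simp
      ring
    · intro l hl
      have hlm : l < m := by
        by_contra h
        exact hl ⟨l - m, by simp; omega⟩
      have : Omega k P (l + 1) ∩ ivl (cell k m n) = ∅ := by
        ext x
        simp only [mem_inter_iff, mem_empty_iff_false, iff_false, not_and]
        intro h1 h2
        exact (Omega_sub hk hP h1).2 (D_anti hk hlm (cell_sub hn h2))
      rw [this]
      simp
  have hnorm : (fun l => ∫ x in ivl (cell k m n), ‖F l x‖) =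
      fun l => ∫ x in ivl (cell k m n), F l x := by
    ext l
    congr 1
    ext x
    exact Real.norm_of_nonneg (hFnn l x)
  exact (hasSum_integral_of_summable_integral_norm hFint (hnorm ▸ hsum.summable)).unique hsum

lemma int_PJ {k : ℕ} (hk : 2 ≤ k) {P : ℝ × ℝ → ℝ × ℝ} (hP : GoodP k P) {m : ℕ} {n : ℤ}
    (hn : Sidx k m n) :
    ∫ x in ivl (P (cell k m n)), wk k P x = (1 / (3 ^ (k - 1) + 1)) ^ (m + 1) := by
  have hM : (0 : ℝ) < 3 ^ (k - 1) := by positivity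
  have heq : EqOn (wk k P) (fun _ => alpha k ^ (m + 1)) (ivl (P (cell k m n))) := by
    intro x hx
    have hxO : x ∈ Omega k P (m + 1) := (mem_Omega_s2 hk).2 ⟨n, hn, hx⟩
    have hx1 := Omega_sub hk hP hxO
    simp only [wk]
    rw [tsum_eq_single m]
    · simp [hxO]
    · intro l hl
      have : x ∉ Omega k P (l + 1) := by
        intro h
        have h' := Omega_sub hk hP h
        rcases lt_or_gt_of_ne hl with h1 | h1
        · exact h'.2 (D_anti hk h1 hx1.1)
        · exact hx1.2 (D_anti hk h1 h'.1)
      simp [this]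
  have hms : MeasurableSet (ivl (P (cell k m n))) := measurableSet_Ico
  rw [setIntegral_congr_fun hms heq]
  obtain ⟨r, hr, -⟩ := P_cell hk hP hn
  rw [hr, setIntegral_const, vol_cell, alpha, pow_mul, smul_eq_mul]
  have : (3 : ℝ) ^ k ≠ 0 := by positivity
  simp only [div_pow, one_pow]
  field_simp

/-- The weight `w_k = ∑_{l≥1} (3^k/(3^{k-1}+1))^l χ_{Ω_l}`
satisfies `∫_{[0,1]} w_k = 1` and `∫_I w_k = ∫_J w_k` for every `l ≥ 1`,
`I ∈ ℐ_l` and `J ∈ 𝒥_{l+1}`. -/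
theorem statement2 (k : ℕ) (hk : 2 ≤ k) (P : ℝ × ℝ → ℝ × ℝ) (hP : GoodP k P) :
    (∫ x in Icc (0:ℝ) 1, wk k P x) = 1 ∧
      ∀ l : ℕ, 1 ≤ l → ∀ I ∈ Ifam k P l, ∀ J ∈ Jfam k (l + 1),
        (∫ x in ivl I, wk k P x) = ∫ x in ivl J, wk k P x := by
  have hz : Sidx k 0 0 := rfl
  refine ⟨?_, ?_⟩
  · have h := int_cell hk hP hz
    rw [pow_zero] at h
    have hc : ivl (cell k 0 0) = Ico (0 : ℝ) 1 := by simp [ivl, cell]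
    rw [integral_Icc_eq_integral_Ico, ← hc, h]
  · intro l hl I hI J hJ
    obtain ⟨m, rfl⟩ : ∃ m, l = m + 1 := ⟨l - 1, by omega⟩
    obtain ⟨J', hJ', rfl⟩ := hI
    obtain ⟨n, hn, rfl⟩ := (Jfam_eq_s2 hk m J').1 hJ'
    obtain ⟨n', hn', rfl⟩ := (Jfam_eq_s2 hk (m + 1) J).1 hJ
    rw [int_PJ hk hP hn, int_cell hk hP hn']

end RT

end
end

section
/- Let r = 1 + 1/3^{k+1}, let l ≥ 1, let I ∈ ℐ_l, and let I' ⊂ [0,1) be any triadic interval with |I'| = |I| that intersects ∪_{j≥1} Ω_j. Then ((1/|I'|) ∫_{I'} w_k^r dx)^{1/r} ≤ 3·(3^k/(3^{k−1}+1))^l, where w_k(x) = Σ_{l=1}^∞ (3^k/(3^{k−1}+1))^l · χ_{Ω_l}(x). -/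
open MeasureTheory Set Filter Topology
open scoped ENNReal

noncomputable section

namespace RT

lemma len_pos_of_tri {I : ℝ × ℝ} (h : IsTriadic I) : 0 < len I := by
  obtain ⟨j, n, h1, h2⟩ := h
  have : (0:ℝ) < 3 ^ j := by positivity
  unfold len; rw [h1, h2]; nlinarith

lemma tri_nested {I I' : ℝ × ℝ} (h : IsTriadic I) (h' : IsTriadic I') (hle : len I' ≤ len I)
    {x : ℝ} (hx : x ∈ ivl I) (hx' : x ∈ ivl I') : ivl I' ⊆ ivl I := by
  obtain ⟨b, m, h1, h2⟩ := h
  obtain ⟨a, n, h1', h2'⟩ := h'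
  have e : len I = 3 ^ b := by unfold len; rw [h1, h2]; ring
  have e' : len I' = 3 ^ a := by unfold len; rw [h1', h2']; ring
  rw [e, e'] at hle
  have hab : a ≤ b := (zpow_le_zpow_iff_right₀ (by norm_num : (1:ℝ) < 3)).1 hle
  obtain ⟨d, rfl⟩ := Int.le.dest hab
  have hpa : (0:ℝ) < 3 ^ a := by positivity
  have hs : (3:ℝ) ^ (a + (d:ℤ)) = 3 ^ a * 3 ^ d := by
    rw [zpow_add₀ (by norm_num), zpow_natCast]
  rw [hs] at h1 h2
  simp only [ivl, mem_Ico] at hx hx'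
  rw [h1, h2] at hx
  rw [h1', h2'] at hx'
  have c1 : (3:ℝ) ^ d * m < n + 1 := by
    have : 3 ^ a * ((3:ℝ) ^ d * m) < 3 ^ a * (n + 1) := by nlinarith [hx.1, hx'.2]
    exact lt_of_mul_lt_mul_left this hpa.le
  have c2 : (n:ℝ) < 3 ^ d * (m + 1) := by
    have : 3 ^ a * (n:ℝ) < 3 ^ a * ((3:ℝ) ^ d * (m + 1)) := by nlinarith [hx.2, hx'.1]
    exact lt_of_mul_lt_mul_left this hpa.le
  have d1 : (3:ℤ) ^ d * m < n + 1 := by exact_mod_cast c1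
  have d2 : n < (3:ℤ) ^ d * (m + 1) := by exact_mod_cast c2
  have f1 : (3:ℝ) ^ d * m ≤ n := by exact_mod_cast Int.lt_add_one_iff.1 d1
  have f2 : (n:ℝ) + 1 ≤ 3 ^ d * (m + 1) := by exact_mod_cast d2
  unfold ivl
  apply Ico_subset_Ico
  · rw [h1, h1', mul_assoc]; exact mul_le_mul_of_nonneg_left f1 hpa.le
  · rw [h2, h2', mul_assoc]; exact mul_le_mul_of_nonneg_left f2 hpa.le

lemma tri_eq {I I' : ℝ × ℝ} (h : IsTriadic I) (h' : IsTriadic I') (hle : len I' = len I)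
    {x : ℝ} (hx : x ∈ ivl I) (hx' : x ∈ ivl I') : I' = I := by
  have s1 := tri_nested h h' hle.le hx hx'
  have s2 := tri_nested h' h hle.ge hx' hx
  have p := len_pos_of_tri h
  have p' := len_pos_of_tri h'
  unfold ivl at s1 s2
  unfold len at *
  rw [Ico_subset_Ico_iff (by linarith)] at s1 s2
  exact Prod.ext (le_antisymm s2.1 s1.1) (le_antisymm s1.2 s2.2)

lemma mid_sub {J : ℝ × ℝ} (h : 0 < len J) : ivl (mid J) ⊆ ivl J := by
  unfold len at h
  unfold ivl mid
  apply Ico_subset_Ico <;> simp <;> linarith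

lemma Jfam_facts (k : ℕ) : ∀ (m : ℕ) (J : ℝ × ℝ), J ∈ Jfam k (m + 1) →
    IsTriadic J ∧ len J = ((3:ℝ) ^ k)⁻¹ ^ m ∧ ivl J ⊆ Ico (0:ℝ) 1
  | 0, J, hJ => by
    simp only [Jfam, mem_singleton_iff] at hJ
    subst hJ
    refine ⟨⟨0, 0, by simp, by simp⟩, by simp [len], by simp [ivl]⟩
  | m + 1, J, hJ => by
    obtain ⟨ht, J0, hJ0, hl, hs⟩ := hJ
    obtain ⟨t0, l0, s0⟩ := Jfam_facts k m J0 hJ0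
    refine ⟨ht, ?_, hs.trans ((mid_sub (len_pos_of_tri t0)).trans s0)⟩
    rw [hl, l0, pow_succ, div_eq_mul_inv]

lemma P_facts {k : ℕ} (hk : 2 ≤ k) {P : ℝ × ℝ → ℝ × ℝ} (hP : GoodP k P) {J : ℝ × ℝ}
    (hJ : IsTriadic J) (hs : ivl J ⊆ Ico (0:ℝ) 1) :
    IsTriadic (P J) ∧ len (P J) = len J / 3 ^ k ∧ ivl (P J) ⊆ ivl J ∧
      ∀ x ∈ ivl (P J), x ∉ ivl (mid J) := by
  obtain ⟨h1, h2, h3⟩ := hP J hJ hs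
  have p := len_pos_of_tri hJ
  have hle : len (P J) ≤ len J / 3 := by
    rw [h2]
    apply div_le_div_of_nonneg_left p.le (by norm_num)
    calc (3:ℝ) = 3 ^ 1 := by norm_num
      _ ≤ 3 ^ k := pow_le_pow_right₀ (by norm_num) (by omega)
  refine ⟨h1, h2, ?_, ?_⟩
  · unfold ivl
    unfold len at *
    simp only [mid] at h3
    apply Ico_subset_Ico <;> rcases h3 with h3 | h3 <;> linarith
  · intro x hx hx'
    unfold ivl at *
    simp only [mem_Ico] at hx hx'
    rcases h3 with h3 | h3 <;> linarith [hx.1, hx.2, hx'.1, hx'.2]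

lemma exists_mid {k : ℕ} (m : ℕ) (d : ℕ) : ∀ (J : ℝ × ℝ), J ∈ Jfam k (m + 1 + d + 1) →
    ∀ x ∈ ivl J, ∃ J0 ∈ Jfam k (m + 1), x ∈ ivl (mid J0) := by
  induction d with
  | zero =>
    intro J hJ x hx
    obtain ⟨ht, J0, hJ0, hl, hs⟩ := hJ
    exact ⟨J0, hJ0, hs hx⟩
  | succ d ih =>
    intro J hJ x hx
    obtain ⟨ht, J0, hJ0, hl, hs⟩ := hJ
    have hJ0' : J0 ∈ Jfam k (m + 1 + d + 1) := hJ0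
    exact ih J0 hJ0' x
      (mid_sub (len_pos_of_tri (Jfam_facts k (m + 1 + d) J0 hJ0').1) (hs hx))

lemma not_mem_Omega {k : ℕ} (hk : 2 ≤ k) {P : ℝ × ℝ → ℝ × ℝ} (hP : GoodP k P) {m m' : ℕ}
    (hm : m < m') {J : ℝ × ℝ} (hJ : J ∈ Jfam k (m' + 1)) {x : ℝ} (hx : x ∈ ivl J) :
    x ∉ Omega k P (m + 1) := by
  intro hO
  simp only [Omega, Ifam, mem_iUnion, mem_image, exists_prop] at hO
  obtain ⟨_, ⟨J1, hJ1, rfl⟩, hx1⟩ := hO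
  obtain ⟨d, rfl⟩ := Nat.exists_eq_add_of_lt hm
  obtain ⟨J0, hJ0, hx0⟩ := exists_mid m d J (by convert hJ using 2; omega) x hx
  obtain ⟨t0, l0, s0⟩ := Jfam_facts k m J0 hJ0
  obtain ⟨t1, l1, s1⟩ := Jfam_facts k m J1 hJ1
  obtain ⟨-, -, a, b⟩ := P_facts hk hP t1 s1
  have : J1 = J0 := tri_eq t0 t1 (by rw [l0, l1]) (mid_sub (len_pos_of_tri t0) hx0) (a hx1)
  subst this
  exact b x hx1 hx0

lemma Omega_mem_J {k : ℕ} (hk : 2 ≤ k) {P : ℝ × ℝ → ℝ × ℝ} (hP : GoodP k P) {m : ℕ} {x : ℝ}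
    (h : x ∈ Omega k P (m + 1)) : ∃ J ∈ Jfam k (m + 1), x ∈ ivl J ∧ x ∈ ivl (P J) := by
  simp only [Omega, Ifam, mem_iUnion, mem_image, exists_prop] at h
  obtain ⟨_, ⟨J1, hJ1, rfl⟩, hx1⟩ := h
  obtain ⟨t1, l1, s1⟩ := Jfam_facts k m J1 hJ1
  obtain ⟨-, -, a, b⟩ := P_facts hk hP t1 s1
  exact ⟨J1, hJ1, a hx1, hx1⟩

lemma wk_eq {k : ℕ} (hk : 2 ≤ k) {P : ℝ × ℝ → ℝ × ℝ} (hP : GoodP k P) {m : ℕ} {x : ℝ}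
    (h : x ∈ Omega k P (m + 1)) : wk k P x = alpha k ^ (m + 1) := by
  unfold wk
  rw [tsum_eq_single m]
  · simp [h]
  · intro b hb
    have : x ∉ Omega k P (b + 1) := by
      intro hb'
      rcases lt_or_gt_of_ne hb with hlt | hlt
      · obtain ⟨J, hJ, hx, -⟩ := Omega_mem_J hk hP h
        exact not_mem_Omega hk hP hlt hJ hx hb'
      · obtain ⟨J, hJ, hx, -⟩ := Omega_mem_J hk hP hb'
        exact not_mem_Omega hk hP hlt hJ hx h
    simp [this]

lemma wk_zero {k : ℕ} {P : ℝ × ℝ → ℝ × ℝ} {x : ℝ}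
    (h : ∀ m, x ∉ Omega k P (m + 1)) : wk k P x = 0 := by
  unfold wk
  simp [h]

/-- the `c`-th triadic subinterval of the middle third -/
def child (k : ℕ) (J : ℝ × ℝ) (c : ℕ) : ℝ × ℝ :=
  (J.1 + len J / 3 + c * (len J / 3 ^ k), J.1 + len J / 3 + (c + 1) * (len J / 3 ^ k))

open Classical in
/-- descendants of generation `i` -/
def desc (k : ℕ) (J : ℝ × ℝ) : ℕ → Finset (ℝ × ℝ)
  | 0 => {J}
  | i + 1 => (desc k J i).biUnion fun J' => (Finset.range (3 ^ (k - 1))).image (child k J')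

lemma desc_card (k : ℕ) (J : ℝ × ℝ) (i : ℕ) : (desc k J i).card ≤ (3 ^ (k - 1)) ^ i := by
  classical
  induction i with
  | zero => simp [desc]
  | succ i ih =>
    rw [desc, pow_succ]
    refine (Finset.card_biUnion_le_card_mul _ _ (3 ^ (k - 1)) ?_).trans
      (Nat.mul_le_mul_right _ ih)
    intro J' _
    exact Finset.card_image_le.trans (by simp)

lemma child_of {k : ℕ} (hk : 2 ≤ k) {J J' : ℝ × ℝ} (hJ : IsTriadic J) (hJ' : IsTriadic J')
    (hl : len J' = len J / 3 ^ k) (hs : ivl J' ⊆ ivl (mid J)) :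
    ∃ c < 3 ^ (k - 1), J' = child k J c := by
  have p' := len_pos_of_tri hJ'
  have hmem : J'.1 ∈ ivl (mid J) := hs (by
    unfold ivl len at *; exact ⟨le_refl _, by linarith⟩)
  obtain ⟨b, N, h1, h2⟩ := hJ
  obtain ⟨a, n, h1', h2'⟩ := hJ'
  have e : len J = 3 ^ b := by unfold len; rw [h1, h2]; ring
  have e' : len J' = 3 ^ a := by unfold len; rw [h1', h2']; ring
  have hpa : (0:ℝ) < 3 ^ a := by positivity
  obtain ⟨k, rfl⟩ : ∃ k', k = k' + 1 := ⟨k - 1, by omega⟩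
  have hb : (3:ℝ) ^ b = 3 ^ a * 3 ^ k * 3 := by
    rw [e, e'] at hl
    rw [hl]; field_simp; ring
  have hm1 : (mid J).1 = 3 ^ a * (3 ^ k * (3 * N + 1)) := by
    simp only [mid]; rw [h2, h1, hb]; ring
  have hm2 : (mid J).2 = 3 ^ a * (3 ^ k * (3 * N + 2)) := by
    simp only [mid]; rw [h2, h1, hb]; ring
  simp only [ivl, mem_Ico] at hmem
  rw [hm1, hm2, h1'] at hmem
  have c1 : (3:ℝ) ^ k * (3 * N + 1) ≤ n := le_of_mul_le_mul_left hmem.1 hpa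
  have c2 : (n:ℝ) < 3 ^ k * (3 * N + 2) := lt_of_mul_lt_mul_left hmem.2 hpa.le
  have d1 : (3:ℤ) ^ k * (3 * N + 1) ≤ n := by exact_mod_cast c1
  have d2 : n < (3:ℤ) ^ k * (3 * N + 2) := by exact_mod_cast c2
  obtain ⟨c, hc⟩ := Int.le.dest d1
  have hcR : (3:ℝ) ^ k * (3 * N + 1) + c = n := by exact_mod_cast hc
  refine ⟨c, ?_, ?_⟩
  · have : (c:ℤ) < 3 ^ k := by nlinarith
    simpa using (by exact_mod_cast this : c < 3 ^ k)
  · rw [hb] at e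
    have q : len J / 3 ^ (k + 1) = 3 ^ a := by rw [← hl, e']
    apply Prod.ext
    · simp only [child]; rw [q, e, h1', h1, ← hcR, hb]; ring
    · simp only [child]; rw [q, e, h2', h1, ← hcR, hb]; ring

lemma mem_desc {k : ℕ} (hk : 2 ≤ k) {l : ℕ} {J : ℝ × ℝ} (hJ : J ∈ Jfam k (l + 1)) {x : ℝ}
    (hx : x ∈ ivl J) (i : ℕ) : ∀ J' ∈ Jfam k (l + i + 1), x ∈ ivl J' → J' ∈ desc k J i := by
  classical
  induction i with
  | zero =>
    intro J' hJ' hx'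
    obtain ⟨t0, l0, s0⟩ := Jfam_facts k l J hJ
    obtain ⟨t1, l1, s1⟩ := Jfam_facts k l J' hJ'
    simp only [desc, Finset.mem_singleton]
    exact tri_eq t0 t1 (by rw [l0, l1]) hx hx'
  | succ i ih =>
    intro J' hJ' hx'
    obtain ⟨ht, J0, hJ0, hl, hs⟩ := hJ'
    have hJ0' : J0 ∈ Jfam k (l + i + 1) := hJ0
    have t0 := (Jfam_facts k _ J0 hJ0').1
    have := ih J0 hJ0' (mid_sub (len_pos_of_tri t0) (hs hx'))
    obtain ⟨c, hc, rfl⟩ := child_of hk t0 ht hl hs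
    simp only [desc, Finset.mem_biUnion, Finset.mem_image, Finset.mem_range]
    exact ⟨J0, this, c, hc, rfl⟩

open Classical in
/-- Cover of `Ω_{l+1+i} ∩ J`. -/
def cov (k : ℕ) (P : ℝ × ℝ → ℝ × ℝ) (J : ℝ × ℝ) (l i : ℕ) : Set ℝ :=
  ⋃ J' ∈ (desc k J i).filter (fun J' => J' ∈ Jfam k (l + i + 1)), ivl (P J')

lemma cov_meas (k : ℕ) (P : ℝ × ℝ → ℝ × ℝ) (J : ℝ × ℝ) (l i : ℕ) :
    MeasurableSet (cov k P J l i) := by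
  unfold cov
  exact Finset.measurableSet_biUnion _ fun _ _ => measurableSet_Ico

lemma cov_vol {k : ℕ} (hk : 2 ≤ k) {P : ℝ × ℝ → ℝ × ℝ} (hP : GoodP k P) (J : ℝ × ℝ) (l i : ℕ) :
    volume (cov k P J l i) ≤
      ENNReal.ofReal (((3:ℝ) ^ (k - 1)) ^ i * ((3:ℝ) ^ k)⁻¹ ^ (l + i + 1)) := by
  classical
  unfold cov
  refine (measure_biUnion_finset_le _ _).trans ?_
  have hterm : ∀ J' ∈ (desc k J i).filter (fun J' => J' ∈ Jfam k (l + i + 1)),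
      volume (ivl (P J')) ≤ ENNReal.ofReal (((3:ℝ) ^ k)⁻¹ ^ (l + i + 1)) := by
    intro J' hJ'
    obtain ⟨t, e, s⟩ := Jfam_facts k _ J' (Finset.mem_filter.1 hJ').2
    obtain ⟨-, e', -⟩ := P_facts hk hP t s
    unfold ivl
    rw [Real.volume_Ico]
    apply le_of_eq
    congr 1
    change len (P J') = _
    rw [e', e, pow_succ, div_eq_mul_inv]
  refine (Finset.sum_le_card_nsmul _ _ _ hterm).trans ?_
  rw [nsmul_eq_mul, ENNReal.ofReal_mul (by positivity)]
  gcongr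
  rw [← ENNReal.ofReal_natCast]
  apply ENNReal.ofReal_le_ofReal
  have := (Finset.card_filter_le (desc k J i) (fun J' => J' ∈ Jfam k (l + i + 1))).trans
    (desc_card k J i)
  exact_mod_cast this

lemma alpha_ge_one {k : ℕ} (hk : 2 ≤ k) : 1 ≤ alpha k := by
  obtain ⟨k, rfl⟩ : ∃ k', k = k' + 1 := ⟨k - 1, by omega⟩
  unfold alpha
  have : (1:ℝ) ≤ 3 ^ k := one_le_pow₀ (by norm_num)
  rw [le_div_iff₀ (by positivity)]
  simp only [Nat.add_sub_cancel, pow_succ]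
  linarith

/-- the numeric heart: with `q = α^r / 3`, `3^{-(k-1)} q ≤ 3 (1 - q)`. -/
lemma numeric {k : ℕ} (hk : 2 ≤ k) {r : ℝ} (hr : r = 1 + 1 / (3:ℝ) ^ (k + 1)) :
    alpha k ^ r / 3 < 1 ∧
      ((3:ℝ) ^ (k - 1))⁻¹ * (alpha k ^ r / 3) * (1 - alpha k ^ r / 3)⁻¹ ≤ 3 := by
  obtain ⟨k, rfl⟩ : ∃ k', k = k' + 1 := ⟨k - 1, by omega⟩
  have ha1 := alpha_ge_one hk
  simp only [Nat.add_sub_cancel]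
  set t : ℝ := ((3:ℝ) ^ k)⁻¹ with ht
  have ht0 : 0 < t := by positivity
  have ht1 : t ≤ 1 / 3 := by
    rw [ht, inv_le_comm₀ (by positivity) (by norm_num)]
    calc ((1:ℝ) / 3)⁻¹ = 3 ^ 1 := by norm_num
      _ ≤ 3 ^ k := pow_le_pow_right₀ (by norm_num) (by omega)
  have hal : alpha (k + 1) = 3 / (1 + t) := by
    unfold alpha
    simp only [Nat.add_sub_cancel]
    rw [ht]; field_simp; ring
  have hr' : r = 1 + t / 9 := by rw [hr, ht]; field_simp; ring
  have hB : alpha (k + 1) ^ r ≤ 3 / (1 + t) * (1 + 2 * t / 9) := by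
    rw [hr', Real.rpow_add (by linarith), Real.rpow_one, hal]
    apply mul_le_mul_of_nonneg_left _ (by positivity)
    have h3 : (3:ℝ) / (1 + t) ≤ 3 := by
      rw [div_le_iff₀ (by positivity)]; linarith
    refine (Real.rpow_le_rpow (by positivity) h3 (by positivity)).trans ?_
    have := rpow_one_add_le_one_add_mul_self (s := 2) (by norm_num)
      (p := t / 9) (by positivity) (by linarith)
    norm_num at this
    linarith
  set q := alpha (k + 1) ^ r / 3
  have hq0 : 0 ≤ q := by positivity
  have hq : q * (1 + t) ≤ 1 + 2 * t / 9 := by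
    have : q ≤ (1 + 2 * t / 9) / (1 + t) := by
      calc q ≤ (3 / (1 + t) * (1 + 2 * t / 9)) / 3 := by
            exact div_le_div_of_nonneg_right hB (by norm_num)
        _ = _ := by field_simp
    rwa [le_div_iff₀ (by positivity)] at this
  have hq1 : q < 1 := by nlinarith
  refine ⟨hq1, ?_⟩
  rw [← div_eq_mul_inv, div_le_iff₀ (by linarith)]
  have : (1 - q) * (1 + t) ≥ 7 * t / 9 := by nlinarith
  nlinarith

lemma key {k : ℕ} (hk : 2 ≤ k) {P : ℝ × ℝ → ℝ × ℝ} (hP : GoodP k P)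
    {r : ℝ} (hr : r = 1 + 1 / (3:ℝ) ^ (k + 1)) {l : ℕ} {J : ℝ × ℝ} (hJ : J ∈ Jfam k (l + 1)) :
    (len J)⁻¹ * ∫ x in ivl J, wk k P x ^ r ≤ 3 * (alpha k ^ r) ^ l := by
  obtain ⟨tJ, eJ, sJ⟩ := Jfam_facts k l J hJ
  obtain ⟨hq1, hnum⟩ := numeric hk hr
  have ha := alpha_ge_one hk
  have hr0 : 0 < r := by rw [hr]; positivity
  set A := alpha k ^ r with hA
  have hA0 : 0 ≤ A := by positivity
  set q := A / 3 with hq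
  have hq0 : 0 ≤ q := by positivity
  have hpow : ∀ n : ℕ, (alpha k ^ n) ^ r = A ^ n := by
    intro n
    rw [hA, ← Real.rpow_natCast, ← Real.rpow_mul (by linarith), mul_comm,
      Real.rpow_mul (by linarith), Real.rpow_natCast]
  have hpt : ∀ x ∈ ivl J, ENNReal.ofReal ‖wk k P x ^ r‖ ≤
      ∑' i : ℕ, (cov k P J l i).indicator (fun _ => ENNReal.ofReal (A ^ (l + i + 1))) x := by
    intro x hx
    by_cases h : ∃ m, x ∈ Omega k P (m + 1)
    · obtain ⟨m, hm⟩ := h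
      have hlm : l ≤ m := by
        by_contra hlt
        exact not_mem_Omega hk hP (not_le.1 hlt) hJ hx hm
      obtain ⟨i, rfl⟩ := Nat.exists_eq_add_of_le hlm
      rw [wk_eq hk hP hm, hpow, Real.norm_of_nonneg (by positivity)]
      refine le_trans ?_ (ENNReal.le_tsum i)
      have : x ∈ cov k P J l i := by
        obtain ⟨J', hJ', hx', hxP⟩ := Omega_mem_J hk hP hm
        unfold cov
        simp only [mem_iUnion, Finset.mem_filter, exists_prop]
        exact ⟨J', ⟨mem_desc hk hJ hx i J' hJ' hx', hJ'⟩, hxP⟩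
      rw [indicator_of_mem this]
    · rw [wk_zero (by simpa using h), Real.zero_rpow hr0.ne']
      simp
  set C : ℝ := len J * A ^ l * (((3:ℝ) ^ (k - 1))⁻¹ * q) with hC
  have hlp := len_pos_of_tri tJ
  have hC0 : 0 ≤ C := by positivity
  have hlint : ∫⁻ x in ivl J, ENNReal.ofReal ‖wk k P x ^ r‖ ≤
      ENNReal.ofReal (C * (1 - q)⁻¹) := by
    calc ∫⁻ x in ivl J, ENNReal.ofReal ‖wk k P x ^ r‖
        ≤ ∫⁻ x in ivl J, ∑' i : ℕ,
          (cov k P J l i).indicator (fun _ => ENNReal.ofReal (A ^ (l + i + 1))) x :=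
          setLIntegral_mono' measurableSet_Ico hpt
      _ ≤ ∫⁻ x, ∑' i : ℕ,
          (cov k P J l i).indicator (fun _ => ENNReal.ofReal (A ^ (l + i + 1))) x :=
          setLIntegral_le_lintegral _ _
      _ = ∑' i : ℕ, ENNReal.ofReal (A ^ (l + i + 1)) * volume (cov k P J l i) := by
          rw [lintegral_tsum]
          · congr 1; ext i
            rw [lintegral_indicator_const (cov_meas k P J l i)]
          · intro i
            exact (measurable_const.indicator (cov_meas k P J l i)).aemeasurable
      _ ≤ ∑' i : ℕ, ENNReal.ofReal (C * q ^ i) := by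
          apply ENNReal.tsum_le_tsum
          intro i
          refine (mul_le_mul_right (cov_vol hk hP J l i) _).trans ?_
          rw [← ENNReal.ofReal_mul (by positivity)]
          apply ENNReal.ofReal_le_ofReal
          apply le_of_eq
          rw [hC, eJ, hq]
          obtain ⟨k, rfl⟩ : ∃ k', k = k' + 1 := ⟨k - 1, by omega⟩
          simp only [Nat.add_sub_cancel]
          rw [pow_succ (3:ℝ) k]
          have : (3:ℝ) ^ k ≠ 0 := by positivity
          generalize (3:ℝ) ^ k = T at *
          simp only [inv_pow, mul_pow, div_pow, pow_add, pow_one, mul_inv]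
          field_simp
      _ = ENNReal.ofReal (C * (1 - q)⁻¹) := by
          rw [← ENNReal.ofReal_tsum_of_nonneg (fun i => by positivity)
            ((summable_geometric_of_lt_one hq0 hq1).mul_left C), tsum_mul_left,
            tsum_geometric_of_lt_one hq0 hq1]
  have hbd : ∫ x in ivl J, wk k P x ^ r ≤ C * (1 - q)⁻¹ := by
    refine (le_abs_self _).trans ?_
    rw [← Real.norm_eq_abs]
    refine (norm_integral_le_lintegral_norm _).trans ?_
    exact ENNReal.toReal_le_of_le_ofReal
      (mul_nonneg hC0 (inv_nonneg.2 (by linarith))) hlint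
  calc (len J)⁻¹ * ∫ x in ivl J, wk k P x ^ r ≤ (len J)⁻¹ * (C * (1 - q)⁻¹) :=
        mul_le_mul_of_nonneg_left hbd (by positivity)
    _ = (((3:ℝ) ^ (k - 1))⁻¹ * q * (1 - q)⁻¹) * A ^ l := by
        rw [hC]; field_simp
    _ ≤ 3 * A ^ l := mul_le_mul_of_nonneg_right hnum (by positivity)

/-- **the claim (2.5) in Lemma 2.2.** With `r = 1 + 1/3^{k+1}`,
for `l ≥ 1`, `I ∈ ℐ_l` and any triadic `I' ⊆ [0,1)` with `|I'| = |I|` meeting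
`⋃_{j≥1} Ω_j`, one has `((1/|I'|) ∫_{I'} w_k^r)^{1/r} ≤ 3 (3^k/(3^{k-1}+1))^l`. -/
theorem statement4 (k : ℕ) (hk : 2 ≤ k) (P : ℝ × ℝ → ℝ × ℝ) (hP : GoodP k P)
    (r : ℝ) (hr : r = 1 + 1 / (3:ℝ) ^ (k + 1))
    (l : ℕ) (hl : 1 ≤ l) (I : ℝ × ℝ) (hI : I ∈ Ifam k P l)
    (I' : ℝ × ℝ) (hI'tri : IsTriadic I') (hI'sub : ivl I' ⊆ Ico (0:ℝ) 1)
    (hlen : len I' = len I)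
    (hmeet : (ivl I' ∩ ⋃ j : ℕ, Omega k P (j + 1)).Nonempty) :
    ((len I')⁻¹ * ∫ x in ivl I', wk k P x ^ r) ^ (1 / r) ≤ 3 * alpha k ^ l := by
  obtain ⟨l, rfl⟩ : ∃ l', l = l' + 1 := ⟨l - 1, by omega⟩
  have ha := alpha_ge_one hk
  have hr1 : 1 ≤ r := by rw [hr]; simp
  have hr0 : 0 < r := by linarith
  have hpow : ∀ n : ℕ, (alpha k ^ n) ^ r = (alpha k ^ r) ^ n := by
    intro n
    rw [← Real.rpow_natCast, ← Real.rpow_mul (by linarith), mul_comm,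
      Real.rpow_mul (by linarith), Real.rpow_natCast]
  have hp' := len_pos_of_tri hI'tri
  have hwnn : ∀ x, 0 ≤ wk k P x ^ r := by
    intro x
    apply Real.rpow_nonneg
    unfold wk
    exact tsum_nonneg fun i => mul_nonneg (by positivity)
      (indicator_nonneg (fun _ _ => zero_le_one) _)
  have hnn : 0 ≤ (len I')⁻¹ * ∫ x in ivl I', wk k P x ^ r :=
    mul_nonneg (by positivity) (integral_nonneg hwnn)
  have hlen' : len I' = ((3:ℝ) ^ k)⁻¹ ^ (l + 1) := by
    obtain ⟨J, hJ, rfl⟩ := hI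
    obtain ⟨t, e, s⟩ := Jfam_facts k l J hJ
    obtain ⟨-, e', -⟩ := P_facts hk hP t s
    rw [hlen, e', e, pow_succ, div_eq_mul_inv]
  suffices h : (len I')⁻¹ * ∫ x in ivl I', wk k P x ^ r ≤ 3 * (alpha k ^ r) ^ (l + 1) by
    have h3 : 3 * (alpha k ^ r) ^ (l + 1) ≤ (3 * alpha k ^ (l + 1)) ^ r := by
      rw [Real.mul_rpow (by norm_num) (by positivity), hpow]
      apply mul_le_mul_of_nonneg_right _ (by positivity)
      calc (3:ℝ) = 3 ^ (1:ℝ) := by simp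
        _ ≤ 3 ^ r := Real.rpow_le_rpow_of_exponent_le (by norm_num) hr1
    refine (Real.rpow_le_rpow hnn (h.trans h3) (by positivity)).trans ?_
    rw [← Real.rpow_mul (by positivity), mul_one_div_cancel hr0.ne', Real.rpow_one]
  obtain ⟨x, hxI, hxO⟩ := hmeet
  obtain ⟨j, hj⟩ := mem_iUnion.1 hxO
  obtain ⟨J, hJ, hxJ, hxP⟩ := Omega_mem_J hk hP hj
  obtain ⟨tJ, eJ, sJ⟩ := Jfam_facts k j J hJ
  obtain ⟨tP, eP, -⟩ := P_facts hk hP tJ sJ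
  rcases le_or_gt j l with hjl | hjl
  · skip
    have hsub : ivl I' ⊆ ivl (P J) := by
      refine tri_nested tP hI'tri ?_ hxP hxI
      rw [hlen', eP, eJ, div_eq_mul_inv, ← pow_succ]
      apply pow_le_pow_of_le_one (by positivity) _ (by omega)
      exact inv_le_one_of_one_le₀ (one_le_pow₀ (by norm_num))
    have hc : ∫ x in ivl I', wk k P x ^ r = ∫ x in ivl I', (alpha k ^ r) ^ (j + 1) := by
      apply setIntegral_congr_fun measurableSet_Ico
      intro y hy
      have : y ∈ Omega k P (j + 1) := by
        simp only [Omega, Ifam, mem_iUnion, exists_prop]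
        exact ⟨P J, ⟨J, hJ, rfl⟩, hsub hy⟩
      simp only [wk_eq hk hP this, hpow]
    have hv : volume.real (ivl I') = len I' := by
      unfold ivl
      rw [Real.volume_real_Ico_of_le (by unfold len at hp'; linarith)]; rfl
    rw [hc, setIntegral_const, hv, smul_eq_mul, inv_mul_cancel_left₀ hp'.ne']
    have hA1 : 1 ≤ alpha k ^ r := Real.one_le_rpow ha hr0.le
    have := pow_le_pow_right₀ hA1 (show j + 1 ≤ l + 1 by omega)
    have : 0 ≤ (alpha k ^ r) ^ (l + 1) := by positivity
    linarith
  · skip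
    have hex : ∃ J0 ∈ Jfam k (l + 1 + 1), x ∈ ivl J0 := by
      rcases Nat.lt_or_ge (l + 1) j with h | h
      · obtain ⟨d, rfl⟩ := Nat.exists_eq_add_of_lt h
        obtain ⟨J0, hJ0, hx0⟩ := exists_mid (l + 1) d J (by convert hJ using 2; omega) x hxJ
        exact ⟨J0, hJ0, mid_sub (len_pos_of_tri (Jfam_facts k (l + 1) J0 hJ0).1) hx0⟩
      · obtain rfl : j = l + 1 := by omega
        exact ⟨J, hJ, hxJ⟩
    obtain ⟨J0, hJ0, hx0⟩ := hex
    obtain ⟨t0, e0, s0⟩ := Jfam_facts k (l + 1) J0 hJ0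
    obtain rfl : I' = J0 := tri_eq t0 hI'tri (by rw [hlen', e0]) hx0 hxI
    exact key hk hP hr hJ0

end RT

end
end
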